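/- arXiv:2012.06529 — 4 statements merged into one kernel-verified Lean document; each statement's English description precedes it below -/
import Mathlib

section
/- Let G_s(x) = (1/(√(2π)·s))·exp(−x²/(2s²)) denote the density of the centered Gaussian law of standard deviation s. Fix reals r, χ, D' > 0. Then there exist C > 0 and K such that for every integer k ≥ K, every positive integer m with |m − k| ≤ √(k·log k), every w ∈ [kχ − D', kχ], and every β ∈ [0,1): | G_{√m·r}(w − mχ) / G_{√k·r}((m − k + β)·χ) − 1 | ≤ C·k^{−1/2}·(log k)^{3/2}. -/
/-!
Write `d = m - k` and `s = √(k log k)`, so that `|d| ≤ s` and the claimed rate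
`k^(-1/2) (log k)^(3/2)` is `η = (s / k) log k = s³ / k²`. The quotient of the densities at `x` and
`y` is the exponential of `(y² / k - x² / m) / (2 r²) - log (m / k) / 2`. The logarithm is
`O(d / k)`. The arguments `x` and `y` are both `O(s)` and, up to sign, bounded perturbations of
`d χ`, so that `y² - x² = O(s)`; hence the difference of quadratic terms splits into
`(y² - x²) / k = O(s / k)` and `x² (1 / k - 1 / m) = O(s² d / k²) = O(s³ / k²)`. The exponent is
therefore `O(η)`, and `η → 0`.
-/

open Set

noncomputable section

/-- Density of the centered Gaussian law `N(0, s²)`. -/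
def gaussDensity (s x : ℝ) : ℝ :=
  (Real.sqrt (2 * Real.pi) * s)⁻¹ * Real.exp (-(x ^ 2) / (2 * s ^ 2))

open Filter Topology

lemma gaussDensity_div_gaussDensity {σ τ : ℝ} (hσ : 0 < σ) (hτ : 0 < τ) (x y : ℝ) :
    gaussDensity σ x / gaussDensity τ y =
      Real.exp (y ^ 2 / (2 * τ ^ 2) - x ^ 2 / (2 * σ ^ 2) - Real.log (σ / τ)) := by
  have hπ : √(2 * Real.pi) ≠ 0 := by positivity
  rw [gaussDensity, gaussDensity, mul_div_mul_comm, ← Real.exp_sub, Real.exp_sub _ (Real.log _),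
    Real.exp_log (div_pos hσ hτ), inv_div_inv, mul_div_mul_left _ _ hπ,
    div_eq_inv_mul (Real.exp _), inv_div]
  congr 2
  ring

lemma gaussDensity_sqrt_mul_div {r k m : ℝ} (hr : 0 < r) (hk : 0 < k) (hm : 0 < m) (x y : ℝ) :
    gaussDensity (√m * r) x / gaussDensity (√k * r) y =
      Real.exp ((y ^ 2 / k - x ^ 2 / m) / (2 * r ^ 2) - Real.log (m / k) / 2) := by
  rw [gaussDensity_div_gaussDensity (by positivity) (by positivity),
    mul_div_mul_right _ _ hr.ne', ← Real.sqrt_div hm.le, Real.log_sqrt (by positivity),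
    mul_pow, mul_pow, Real.sq_sqrt hk.le, Real.sq_sqrt hm.le]
  congr 2
  field_simp

lemma abs_log_le_two_mul_abs_sub_one {x : ℝ} (hx : 1 / 2 ≤ x) :
    |Real.log x| ≤ 2 * |x - 1| := by
  have hx0 : 0 < x := by linarith
  have hupper : Real.log x ≤ x - 1 := Real.log_le_sub_one_of_pos hx0
  have hlower : (x - 1) / x ≤ Real.log x := by
    simpa [sub_div, hx0.ne'] using Real.one_sub_inv_le_log_of_pos hx0
  have hdiv : |(x - 1) / x| ≤ 2 * |x - 1| := by
    rw [abs_div, abs_of_pos hx0, div_le_iff₀ hx0]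
    nlinarith [abs_nonneg (x - 1)]
  rw [abs_le]
  constructor
  · linarith [neg_abs_le ((x - 1) / x)]
  · linarith [le_abs_self (x - 1), abs_nonneg (x - 1)]

lemma abs_sq_div_sub_sq_div_le {k m x y R δ : ℝ} (hk : 0 < k) (hm : k / 2 ≤ m)
    (hx : |x| ≤ R) (hy : |y| ≤ R) (hxy : |(|x| - |y|)| ≤ δ) :
    |y ^ 2 / k - x ^ 2 / m| ≤ 2 * R * δ / k + 2 * R ^ 2 * |m - k| / k ^ 2 := by
  have hm0 : 0 < m := by linarith
  have hR : 0 ≤ R := (abs_nonneg x).trans hx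
  have hsplit : y ^ 2 / k - x ^ 2 / m = (y ^ 2 - x ^ 2) / k + x ^ 2 * (m - k) / (k * m) := by
    field_simp
    ring
  have hnum : |(y ^ 2 - x ^ 2) / k| ≤ 2 * R * δ / k := by
    rw [abs_div, abs_of_pos hk, ← sq_abs x, ← sq_abs y, sq_sub_sq, abs_mul, abs_sub_comm |y|,
      abs_of_nonneg (by positivity), two_mul R, add_comm |y|]
    gcongr
  have hden : |x ^ 2 * (m - k) / (k * m)| ≤ 2 * R ^ 2 * |m - k| / k ^ 2 := by
    rw [abs_div, abs_mul, abs_pow, abs_of_pos (mul_pos hk hm0)]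
    calc |x| ^ 2 * |m - k| / (k * m) ≤ R ^ 2 * |m - k| / (k * (k / 2)) := by gcongr
      _ = 2 * R ^ 2 * |m - k| / k ^ 2 := by field_simp
  rw [hsplit]
  exact (abs_add_le _ _).trans (add_le_add hnum hden)

lemma abs_sq_div_sub_sq_div_sub_log_le {r k m L M x y : ℝ} (hk : 0 < k) (hL : 1 ≤ L)
    (hkm : k / 2 ≤ m) (hm : |m - k| ≤ √(k * L))
    (hx : |x| ≤ M * √(k * L)) (hy : |y| ≤ M * √(k * L)) (hxy : |(|x| - |y|)| ≤ M) :
    |(y ^ 2 / k - x ^ 2 / m) / (2 * r ^ 2) - Real.log (m / k) / 2| ≤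
      (1 + 2 * M ^ 2 / r ^ 2) * (√(k * L) / k * L) := by
  set s := √(k * L)
  have hs_sq : s ^ 2 = k * L := Real.sq_sqrt (by positivity)
  have hsk : s / k ≤ s / k * L := le_mul_of_one_le_right (by positivity) hL
  have hlog : |Real.log (m / k)| ≤ 2 * (s / k) := by
    have hdiv : m / k - 1 = (m - k) / k := div_sub_one hk.ne'
    refine (abs_log_le_two_mul_abs_sub_one ((le_div_iff₀ hk).2 (by linarith))).trans ?_
    rw [hdiv, abs_div, abs_of_pos hk]
    gcongr
  have hquad : |y ^ 2 / k - x ^ 2 / m| ≤ 4 * M ^ 2 * (s / k * L) := by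
    calc |y ^ 2 / k - x ^ 2 / m|
        ≤ 2 * (M * s) * M / k + 2 * (M * s) ^ 2 * |m - k| / k ^ 2 :=
          abs_sq_div_sub_sq_div_le hk hkm hx hy hxy
      _ ≤ 2 * (M * s) * M / k + 2 * (M * s) ^ 2 * s / k ^ 2 := by gcongr
      _ = 2 * M ^ 2 * (s / k) + 2 * M ^ 2 * (s / k * L) := by
          rw [mul_pow, hs_sq]
          field_simp
      _ ≤ 2 * M ^ 2 * (s / k * L) + 2 * M ^ 2 * (s / k * L) := by gcongr
      _ = 4 * M ^ 2 * (s / k * L) := by ring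
  calc |(y ^ 2 / k - x ^ 2 / m) / (2 * r ^ 2) - Real.log (m / k) / 2|
      ≤ |y ^ 2 / k - x ^ 2 / m| / (2 * r ^ 2) + |Real.log (m / k)| / 2 := by
        refine (abs_sub _ _).trans_eq ?_
        rw [abs_div, abs_div, abs_of_nonneg (by positivity : 0 ≤ 2 * r ^ 2), abs_two]
    _ ≤ 4 * M ^ 2 * (s / k * L) / (2 * r ^ 2) + 2 * (s / k * L) / 2 := by
        gcongr
        exact hlog.trans (by gcongr)
    _ = (1 + 2 * M ^ 2 / r ^ 2) * (s / k * L) := by ring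

lemma abs_gaussDensity_div_sub_one_le {r k m L M x y : ℝ} (hr : 0 < r) (hk : 0 < k) (hL : 1 ≤ L)
    (hm : |m - k| ≤ √(k * L))
    (hx : |x| ≤ M * √(k * L)) (hy : |y| ≤ M * √(k * L)) (hxy : |(|x| - |y|)| ≤ M)
    (hsmall : 2 * (1 + 2 * M ^ 2 / r ^ 2) * (√(k * L) / k * L) ≤ 1) :
    |gaussDensity (√m * r) x / gaussDensity (√k * r) y - 1| ≤
      2 * (1 + 2 * M ^ 2 / r ^ 2) * (√(k * L) / k * L) := by
  have hrate : √(k * L) / k ≤ √(k * L) / k * L := le_mul_of_one_le_right (by positivity) hL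
  have hconst : √(k * L) / k * L ≤ (1 + 2 * M ^ 2 / r ^ 2) * (√(k * L) / k * L) :=
    le_mul_of_one_le_left (by positivity) (le_add_of_nonneg_right (by positivity))
  have hs : √(k * L) / k ≤ 1 / 2 := by linarith
  have hkm : k / 2 ≤ m := by linarith [(div_le_iff₀ hk).1 hs, (abs_le.1 hm).1]
  have hexp := abs_sq_div_sub_sq_div_sub_log_le (r := r) hk hL hkm hm hx hy hxy
  rw [gaussDensity_sqrt_mul_div hr hk (by linarith)]
  exact (Real.abs_exp_sub_one_le (by linarith [(abs_nonneg _).trans hexp])).trans (by linarith)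

lemma abs_mul_add_le_mul {d s χ e E : ℝ} (hd : |d| ≤ s) (hs : 1 ≤ s) (he : |e| ≤ E) :
    |d * χ + e| ≤ (|χ| + E) * s := by
  have hE : 0 ≤ E := (abs_nonneg e).trans he
  calc |d * χ + e| ≤ |d| * |χ| + |e| := (abs_add_le _ _).trans_eq (by rw [abs_mul])
    _ ≤ s * |χ| + s * E := by
        gcongr
        exact he.trans (le_mul_of_one_le_left hE hs)
    _ = (|χ| + E) * s := by ring

lemma abs_gaussDensity_drift_div_sub_one_le {r χ D B k m L w β : ℝ} (hr : 0 < r) (hk : 1 ≤ k)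
    (hL : 1 ≤ L) (hm : |m - k| ≤ √(k * L)) (hw : |w - k * χ| ≤ D) (hβ : |β| ≤ B)
    (hsmall : 2 * (1 + 2 * (|χ| + (D + B * |χ|)) ^ 2 / r ^ 2) * (√(k * L) / k * L) ≤ 1) :
    |gaussDensity (√m * r) (w - m * χ) / gaussDensity (√k * r) ((m - k + β) * χ) - 1| ≤
      2 * (1 + 2 * (|χ| + (D + B * |χ|)) ^ 2 / r ^ 2) * (√(k * L) / k * L) := by
  have hs : 1 ≤ √(k * L) := Real.one_le_sqrt.2 (one_le_mul_of_one_le_of_one_le hk hL)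
  have hβχ : |β * χ| ≤ B * |χ| := by
    rw [abs_mul]
    gcongr
  have hD : 0 ≤ D := (abs_nonneg _).trans hw
  have hB : 0 ≤ B * |χ| := (abs_nonneg _).trans hβχ
  have hx : |w - m * χ| = |(m - k) * χ + (k * χ - w)| := by
    rw [← abs_neg]
    congr 1
    ring
  have hy : (m - k + β) * χ = (m - k) * χ + β * χ := by ring
  rw [abs_sub_comm] at hw
  rw [hy]
  refine abs_gaussDensity_div_sub_one_le hr (by linarith) hL hm ?_ ?_ ?_ hsmall
  · exact hx ▸ (abs_mul_add_le_mul hm hs hw).trans (by gcongr; linarith)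
  · exact (abs_mul_add_le_mul hm hs hβχ).trans (by gcongr; linarith)
  · calc |(|w - m * χ| - |(m - k) * χ + β * χ|)|
        ≤ |(m - k) * χ + (k * χ - w) - ((m - k) * χ + β * χ)| := hx ▸ abs_abs_sub_abs_le _ _
      _ = |(k * χ - w) - β * χ| := by rw [add_sub_add_left_eq_sub]
      _ ≤ |k * χ - w| + |β * χ| := abs_sub _ _
      _ ≤ |χ| + (D + B * |χ|) := by linarith [abs_nonneg χ]

lemma sqrt_mul_div_mul_eq_rpow {k L : ℝ} (hk : 0 < k) (hL : 0 < L) :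
    √(k * L) / k * L = k ^ (-(1 / 2) : ℝ) * L ^ ((3 : ℝ) / 2) := by
  have hk' : k ^ (-(1 / 2) : ℝ) = √k / k := by
    rw [Real.rpow_neg hk.le, ← Real.sqrt_eq_rpow, Real.sqrt_div_self]
  have hL' : L ^ ((3 : ℝ) / 2) = √L * L := by
    rw [show (3 : ℝ) / 2 = 1 / 2 + 1 by norm_num, Real.rpow_add_one hL.ne', Real.sqrt_eq_rpow]
  rw [hk', hL', Real.sqrt_mul hk.le]
  ring

lemma tendsto_rpow_neg_mul_log_rpow_atTop {a : ℝ} (ha : 0 < a) (b : ℝ) :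
    Tendsto (fun k : ℝ => k ^ (-a) * Real.log k ^ b) atTop (𝓝 0) := by
  refine (isLittleO_log_rpow_rpow_atTop b ha).tendsto_div_nhds_zero.congr' ?_
  filter_upwards [eventually_ge_atTop 0] with k hk
  rw [Real.rpow_neg hk, div_eq_inv_mul]

theorem stmt14_general (r χ D B : ℝ) (hr : 0 < r) :
    ∃ C : ℝ, 0 < C ∧ ∀ᶠ k : ℝ in atTop, ∀ m : ℝ, |m - k| ≤ √(k * Real.log k) →
      ∀ w : ℝ, |w - k * χ| ≤ D → ∀ β : ℝ, |β| ≤ B →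
        |gaussDensity (√m * r) (w - m * χ) / gaussDensity (√k * r) ((m - k + β) * χ) - 1|
          ≤ C * k ^ (-(1 / 2) : ℝ) * Real.log k ^ ((3 : ℝ) / 2) := by
  set C := 2 * (1 + 2 * (|χ| + (D + B * |χ|)) ^ 2 / r ^ 2)
  have hrate := (tendsto_rpow_neg_mul_log_rpow_atTop (half_pos one_pos) (3 / 2)).const_mul C
  rw [mul_zero] at hrate
  refine ⟨C, by positivity, ?_⟩
  filter_upwards [hrate.eventually_le_const one_pos,
    Real.tendsto_log_atTop.eventually_ge_atTop 1, eventually_ge_atTop 1]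
    with k hsmall hlog hk m hm w hw β hβ
  rw [← sqrt_mul_div_mul_eq_rpow (by linarith) (by linarith)] at hsmall
  rw [mul_assoc, ← sqrt_mul_div_mul_eq_rpow (by linarith) (by linarith)]
  exact abs_gaussDensity_drift_div_sub_one_le hr hk hlog hm hw hβ hsmall

theorem stmt14 (r χ D' : ℝ) (hr : 0 < r) (hχ : 0 < χ) (hD' : 0 < D') :
    ∃ C : ℝ, 0 < C ∧ ∃ K : ℕ, ∀ k : ℕ, K ≤ k → ∀ m : ℕ, 0 < m →
      |(m : ℝ) - k| ≤ Real.sqrt (k * Real.log k) →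
      ∀ w ∈ Icc (k * χ - D') (k * χ), ∀ β ∈ Ico (0 : ℝ) 1,
        |gaussDensity (Real.sqrt m * r) (w - m * χ) /
            gaussDensity (Real.sqrt k * r) (((m : ℝ) - k + β) * χ) - 1|
          ≤ C * (k : ℝ) ^ (-(1 / 2) : ℝ) * Real.log k ^ ((3 : ℝ) / 2) := by
  obtain ⟨C, hC, h⟩ := stmt14_general r χ D' 1 hr
  obtain ⟨K, hK⟩ := eventually_atTop.1 (tendsto_natCast_atTop_atTop.eventually h)
  exact ⟨C, hC, K, fun k hk m _ hm w hw β hβ => hK k hk m hm w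
    (abs_le.2 ⟨by linarith [hw.1], by linarith [hw.2]⟩) β (abs_le.2 ⟨by linarith [hβ.1], hβ.2.le⟩)⟩
end
end

section
/- Let Φ be a uniformly contracting C^{1+γ} smooth IFS on a compact interval I (γ > 0), with two maps having distinct fixed points. If Λ_c ≠ {0} (the derivative cocycle is not aperiodic), then there exist t, r ∈ ℝ such that the set F_Φ = {log|f'(y)| : f ∈ Φ, y ∈ I, f(y) = y} is contained in {t + r·m : m ∈ ℤ}. -/
/-!
The constant word `iii…` is unchanged by prepending `i`, so at this word `φ` cancels from the
cohomological equation, leaving `u * exp (θ * z * I) = 1`, where `z` is the logarithm of `|f_i'|` at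
the coded point. That point is a limit of iterates of `f_i`, hence its unique fixed point. As `u`
does not depend on `i`, for `θ ≠ 0` all these logarithms are congruent modulo `2π / θ`.
-/

open MeasureTheory Filter Set
open scoped ENNReal Topology

noncomputable section

/-- `wordComp f ω m = f_{ω 0} ∘ f_{ω 1} ∘ ⋯ ∘ f_{ω (m-1)}`. -/
def wordComp {ι : Type*} (f : ι → ℝ → ℝ) (ω : ℕ → ι) : ℕ → ℝ → ℝ
  | 0 => id
  | m + 1 => wordComp f ω m ∘ f (ω m)

/-- Prepend a symbol to an infinite word. -/
def prepend {ι : Type*} (a : ι) (ω : ℕ → ι) : ℕ → ι := fun m =>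
  match m with
  | 0 => a
  | k + 1 => ω k

/-- The metric `d_ρ` on the symbolic space. -/
def dMet {ι : Type*} (ρ : ℝ) (ω ω' : ℕ → ι) : ℝ :=
  haveI := Classical.propDecidable (ω = ω')
  if ω = ω' then 0 else ρ ^ sInf {m : ℕ | ω m ≠ ω' m}

/-- `κ`-Hölder continuity with respect to the metric `d_ρ`. -/
def IsHolderW {ι : Type*} (κ ρ : ℝ) (φ : (ℕ → ι) → ℂ) : Prop :=
  ∃ H : ℝ, ∀ ω ω', ‖φ ω - φ ω'‖ ≤ H * dMet ρ ω ω' ^ κ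

/-- The derivative cocycle `c(a, ω) = -log |f_a'(x_ω)|`. -/
def derivCocycle {ι : Type*} (f : ι → ℝ → ℝ) (xc : (ℕ → ι) → ℝ) (a : ι) (ω : ℕ → ι) : ℝ :=
  -Real.log |deriv (f a) (xc ω)|

/-- The set `Λ_c` of periods of the derivative cocycle. -/
def LambdaC {ι : Type*} (f : ι → ℝ → ℝ) (xc : (ℕ → ι) → ℝ) (ρ κ : ℝ) : Set ℝ :=
  {θ | ∃ (φ : (ℕ → ι) → ℂ) (u : ℂ), IsHolderW κ ρ φ ∧ (∀ ω, ‖φ ω‖ = 1) ∧ ‖u‖ = 1 ∧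
    ∀ (a : ι) (ω : ℕ → ι),
      φ (prepend a ω) = u * Complex.exp (-(((θ * derivCocycle f xc a ω : ℝ) : ℂ)) * Complex.I) * φ ω}

theorem prepend_const {ι : Type*} (i : ι) : prepend i (fun _ => i) = fun _ => i := by
  funext m
  cases m <;> rfl

theorem wordComp_const {ι : Type*} (f : ι → ℝ → ℝ) (i : ι) (m : ℕ) :
    wordComp f (fun _ => i) m = (f i)^[m] := by
  induction m with
  | zero => rfl
  | succ m ih => rw [wordComp, ih, Function.iterate_succ]

theorem subsingleton_inter_fixedPoints_of_deriv_ne_one {g : ℝ → ℝ} {s : Set ℝ}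
    (hs : s.OrdConnected) (hcont : ContinuousOn g s) (hdiff : DifferentiableOn ℝ g (interior s))
    (hderiv : ∀ x ∈ interior s, deriv g x ≠ 1) : (s ∩ Function.fixedPoints g).Subsingleton := by
  rintro x ⟨hxs, hx⟩ y ⟨hys, hy⟩
  by_contra! hne
  wlog hxy : x < y generalizing x y
  · exact this hys hy hxs hx hne.symm (hne.lt_or_gt.resolve_left hxy)
  have hIcc : Icc x y ⊆ s := hs.out hxs hys
  have hIoo : Ioo x y ⊆ interior s := interior_Icc (a := x) ▸ interior_mono hIcc
  obtain ⟨ξ, hξ, hslope⟩ := exists_deriv_eq_slope g hxy (hcont.mono hIcc) (hdiff.mono hIoo)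
  rw [hx.eq, hy.eq, div_self (sub_pos.mpr hxy).ne'] at hslope
  exact hderiv ξ (hIoo hξ) hslope

theorem mem_inter_fixedPoints_of_tendsto_iterate {X : Type*} [TopologicalSpace X] [T2Space X]
    {g : X → X} {s : Set X} {x₀ x : X} (hs : IsClosed s) (hmaps : MapsTo g s s)
    (hcont : ∀ y ∈ s, ContinuousAt g y) (hx₀ : x₀ ∈ s)
    (hx : Tendsto (fun m => g^[m] x₀) atTop (𝓝 x)) : x ∈ s ∩ Function.fixedPoints g := by
  have hxs : x ∈ s := hs.mem_of_tendsto hx (Eventually.of_forall fun m => hmaps.iterate m hx₀)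
  exact ⟨hxs, isFixedPt_of_tendsto_iterate hx (hcont x hxs)⟩

theorem exists_int_eq_neg_arg_add_of_mul_exp_eq_one {u : ℂ} {x : ℝ}
    (h : u * Complex.exp (x * Complex.I) = 1) :
    ∃ m : ℤ, x = -u.arg + 2 * Real.pi * m := by
  have hu : u = Complex.exp ((-x : ℝ) * Complex.I) := by
    rw [eq_inv_of_mul_eq_one_left h, ← Complex.exp_neg, Complex.ofReal_neg, neg_mul]
  have harg : u.arg = -x - toIocDiv Real.two_pi_pos (-Real.pi) (-x) * (2 * Real.pi) := by
    rw [hu, Complex.arg_exp_mul_I, toIocMod, zsmul_eq_mul]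
  refine ⟨-toIocDiv Real.two_pi_pos (-Real.pi) (-x), ?_⟩
  rw [harg, Int.cast_neg]
  ring

section LambdaC

variable {ι : Type*} {f : ι → ℝ → ℝ} {xc : (ℕ → ι) → ℝ} {ρ κ θ : ℝ}

theorem zero_mem_lambdaC : 0 ∈ LambdaC f xc ρ κ :=
  ⟨fun _ => 1, 1, ⟨0, by simp⟩, by simp, by simp, by simp⟩

theorem exists_ne_zero_mem_lambdaC (hΛ : LambdaC f xc ρ κ ≠ {0}) :
    ∃ θ ∈ LambdaC f xc ρ κ, θ ≠ 0 := by
  by_contra! h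
  exact hΛ (eq_singleton_iff_unique_mem.mpr ⟨zero_mem_lambdaC, h⟩)

theorem exists_mul_exp_log_deriv_eq_one_of_mem_lambdaC (hθ : θ ∈ LambdaC f xc ρ κ) :
    ∃ u : ℂ, ∀ i,
      u * Complex.exp ((θ * Real.log |deriv (f i) (xc fun _ => i)| : ℝ) * Complex.I) = 1 := by
  obtain ⟨φ, u, -, hφ, -, hcoh⟩ := hθ
  refine ⟨u, fun i => ?_⟩
  have hφi : φ (fun _ => i) ≠ 0 := norm_ne_zero_iff.mp (hφ _ ▸ one_ne_zero)
  have hi := hcoh i fun _ => i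
  rw [prepend_const, eq_comm, mul_eq_right₀ hφi] at hi
  simpa only [derivCocycle, mul_neg, Complex.ofReal_neg, neg_neg] using hi

theorem exists_log_deriv_eq_add_mul_int_of_mem_lambdaC (hθ : θ ∈ LambdaC f xc ρ κ) (hθ₀ : θ ≠ 0) :
    ∃ t r : ℝ, ∀ i, ∃ m : ℤ, Real.log |deriv (f i) (xc fun _ => i)| = t + r * m := by
  obtain ⟨u, hu⟩ := exists_mul_exp_log_deriv_eq_one_of_mem_lambdaC hθ
  refine ⟨-u.arg / θ, 2 * Real.pi / θ, fun i => ?_⟩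
  obtain ⟨m, hm⟩ := exists_int_eq_neg_arg_add_of_mul_exp_eq_one (hu i)
  refine ⟨m, mul_left_cancel₀ hθ₀ (hm.trans ?_)⟩
  field_simp

end LambdaC

theorem stmt15_general {ι : Type*} {f : ι → ℝ → ℝ} {s : Set ℝ} (hs : IsClosed s)
    (hconn : s.OrdConnected) (hmaps : ∀ i, MapsTo (f i) s s)
    (hderiv₀ : ∀ i, ∀ x ∈ s, deriv (f i) x ≠ 0) (hderiv₁ : ∀ i, ∀ x ∈ s, deriv (f i) x ≠ 1)
    {x₀ : ℝ} (hx₀ : x₀ ∈ s) {xc : (ℕ → ι) → ℝ}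
    (hxc : ∀ ω, Tendsto (fun m => wordComp f ω m x₀) atTop (𝓝 (xc ω)))
    {ρ κ : ℝ} (hΛ : LambdaC f xc ρ κ ≠ {0}) :
    ∃ t r : ℝ, ∀ z : ℝ,
      (∃ i, ∃ y ∈ s, f i y = y ∧ z = Real.log |deriv (f i) y|) →
      ∃ m : ℤ, z = t + r * m := by
  have hdiff (i : ι) (x : ℝ) (hx : x ∈ s) : DifferentiableAt ℝ (f i) x :=
    differentiableAt_of_deriv_ne_zero (hderiv₀ i x hx)
  have hcode (i : ι) : xc (fun _ => i) ∈ s ∩ Function.fixedPoints (f i) :=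
    mem_inter_fixedPoints_of_tendsto_iterate hs (hmaps i)
      (fun x hx => (hdiff i x hx).continuousAt) hx₀
      (by simpa only [wordComp_const] using hxc fun _ => i)
  have hunique (i : ι) : (s ∩ Function.fixedPoints (f i)).Subsingleton :=
    subsingleton_inter_fixedPoints_of_deriv_ne_one hconn
      (fun x hx => (hdiff i x hx).continuousAt.continuousWithinAt)
      (fun x hx => (hdiff i x (interior_subset hx)).differentiableWithinAt)
      (fun x hx => hderiv₁ i x (interior_subset hx))
  obtain ⟨θ, hθ, hθ₀⟩ := exists_ne_zero_mem_lambdaC hΛ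
  obtain ⟨t, r, htr⟩ := exists_log_deriv_eq_add_mul_int_of_mem_lambdaC hθ hθ₀
  refine ⟨t, r, ?_⟩
  rintro _ ⟨i, y, hy, hfy, rfl⟩
  exact hunique i (hcode i) ⟨hy, hfy⟩ ▸ htr i

theorem stmt15 {n : ℕ} (hn : 2 ≤ n) (f : Fin n → ℝ → ℝ) (a b : ℝ) (hab : a < b)
    (γ : ℝ) (hγ : 0 < γ)
    (hmaps : ∀ i, MapsTo (f i) (Icc a b) (Icc a b))
    (hsmooth : ∀ i, ContDiff ℝ 1 (f i))
    (hHolder : ∃ C : ℝ, 0 < C ∧ ∀ i, ∀ x ∈ Icc a b, ∀ y ∈ Icc a b,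
      |deriv (f i) x - deriv (f i) y| ≤ C * |x - y| ^ γ)
    (c0 c1 : ℝ) (hc0 : 0 < c0) (hc1 : c1 < 1)
    (hcontr : ∀ i, ∀ x ∈ Icc a b, c0 ≤ |deriv (f i) x| ∧ |deriv (f i) x| ≤ c1)
    (hfix : ∃ i j : Fin n, ∃ y ∈ Icc a b, ∃ z ∈ Icc a b, f i y = y ∧ f j z = z ∧ y ≠ z)
    (x₀ : ℝ) (hx₀ : x₀ ∈ Icc a b)
    (xc : (ℕ → Fin n) → ℝ)
    (hxc : ∀ ω, Tendsto (fun m => wordComp f ω m x₀) atTop (nhds (xc ω)))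
    (ρ : ℝ) (hρ : ρ = (sSup {s : ℝ | ∃ i, ∃ x ∈ Icc a b, s = |deriv (f i) x|}) ^ γ)
    (κ : ℝ) (hκ : κ ∈ Ioc (0 : ℝ) 1)
    (hΛ : LambdaC f xc ρ κ ≠ {0}) :
    ∃ t r : ℝ, ∀ z : ℝ,
      (∃ i, ∃ y ∈ Icc a b, f i y = y ∧ z = Real.log |deriv (f i) y|) →
      ∃ m : ℤ, z = t + r * m :=
  stmt15_general isClosed_Icc ordConnected_Icc hmaps
    (fun i x hx => abs_pos.mp (hc0.trans_le (hcontr i x hx).1))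
    (fun i x hx => ((le_abs_self _).trans_lt ((hcontr i x hx).2.trans_lt hc1)).ne) hx₀ hxc hΛ
end
end

section
/- Let Φ be an orientation preserving self-similar IFS on a compact interval I with attractor K. Define Φ_1 = Φ and, for each integer m ≥ 2, Φ_m = {g : g = φ_1∘⋯∘φ_ℓ with φ_1,…,φ_ℓ ∈ Φ, g'(0) < 1/m, and (φ_1∘⋯∘φ_{ℓ−1})'(0) ≥ 1/m}. Then dim_H K = sup{ dim μ : m ∈ ℕ and μ is a self-similar measure with respect to Φ_m and a strictly positive probability vector }, where dim μ = inf{dim_H X : X Borel, μ(X) > 0}. -/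
/-!
The dimension of `K` bounds the supremum because a self-similar measure of `Φ_m` gives full mass to
`K`: the maps contract neighbourhoods of `K` towards `K`, so a neighbourhood of radius `R` has at
most the mass of the neighbourhood of radius `c ^ k * R`, for every `k`.

Conversely, let `d < dimH K` and fix `x₀ ∈ K`. For each `m` take a maximal family `S` of words of
`Φ_m` whose points `f_w x₀` are more than `const / m` apart. By maximality `K` is covered by `#S`
balls of radius comparable to `1 / m`, so `#S ≤ C * m ^ d` cannot hold for large `m`.
Fix such an `m`, and take the self-similar measure of `Φ_m` for the probability vector
that spreads almost all the mass evenly over `S` and a total of `1 / (#S + 1)` over all words. Even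
if `Φ` has overlaps, a small set is charged by at most one word of `S`, and the rest of the mass is
small, so passing from scale `ρ` to `ρ * e / m`, where `e` bounds the contraction ratios from below,
multiplies the largest mass of a set by at most `2 / (#S + 1) ≤ (e / m) ^ d`. The mass distribution
principle then gives `dim μ ≥ d`.

The measure itself is the law of `lim g (ω 0) (⋯ (g (ω k) x₀))` for an i.i.d. sequence `ω` of maps.
-/

open MeasureTheory Filter Set
open scoped ENNReal Topology

noncomputable section

/-- Composition of the maps of an IFS along a finite word:
`compList f [i₁, …, i_ℓ] = f i₁ ∘ ⋯ ∘ f i_ℓ`. -/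
def compList {ι : Type*} (f : ι → ℝ → ℝ) : List ι → ℝ → ℝ
  | [] => id
  | i :: l => f i ∘ compList f l

/-- The product of the contraction ratios along a finite word, i.e. `g'(0)` for the
composition `g` of the corresponding affine orientation preserving maps. -/
def ratioProd {n : ℕ} (r : Fin n → ℝ) (w : List (Fin n)) : ℝ := (w.map r).prod

/-- The induced IFS `Φ_m`, described by the set of finite words
`w = φ₁⋯φ_ℓ` with `g = φ₁∘⋯∘φ_ℓ`, `g'(0) < 1/m` and `(φ₁∘⋯∘φ_{ℓ-1})'(0) ≥ 1/m`.
For `m = 1` this is exactly the set of one-letter words, i.e. `Φ` itself. -/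
def Phim {n : ℕ} (r : Fin n → ℝ) (m : ℕ) : Set (List (Fin n)) :=
  {w | w ≠ [] ∧ ratioProd r w < 1 / m ∧ 1 / (m : ℝ) ≤ ratioProd r w.dropLast}

/-- The (lower) Hausdorff dimension of a measure. -/
def dimOf (μ : Measure ℝ) : ℝ≥0∞ :=
  ⨅ (X : Set ℝ) (_ : MeasurableSet X) (_ : 0 < μ X), dimH X

section HausdorffDimension

open Metric
open scoped NNReal

variable {E : Type*} [EMetricSpace E]

lemma sum_ediam_closedEBall_rpow_le (N : Finset E) (ε d : ℝ≥0) :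
    ∑ x : N, ediam (closedEBall x.1 ε) ^ (d : ℝ) ≤
      2 ^ (d : ℝ) * (N.card * ε ^ (d : ℝ) : ℝ≥0) := calc
  ∑ x : N, ediam (closedEBall x.1 ε) ^ (d : ℝ)
    ≤ ∑ _x : N, (2 * (ε : ℝ≥0∞)) ^ (d : ℝ) := by gcongr; exact ediam_closedEBall_le
  _ = 2 ^ (d : ℝ) * (N.card * ε ^ (d : ℝ) : ℝ≥0) := by
    rw [Finset.sum_const, Finset.card_univ, Fintype.card_coe, nsmul_eq_mul,
      ENNReal.mul_rpow_of_nonneg _ _ d.coe_nonneg, ENNReal.coe_mul, ENNReal.coe_natCast,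
      ENNReal.coe_rpow_of_nonneg _ d.coe_nonneg, mul_left_comm]

lemma eventually_forall_isCover_lt_card {K : Set E} {d : ℝ≥0} (hd : d < dimH K) (C : ℝ≥0) :
    ∀ᶠ ε : ℝ≥0 in 𝓝 0, ∀ N : Finset E, IsCover ε K N → C < N.card * ε ^ (d : ℝ) := by
  borelize E
  by_contra hfreq
  simp only [not_eventually, not_forall, not_lt, exists_prop] at hfreq
  set s : Set ℝ≥0 := {ε | ∃ N : Finset E, IsCover ε K N ∧ N.card * ε ^ (d : ℝ) ≤ C}
  have hs : ∀ ε ∈ s, ∃ N : Finset E, IsCover ε K N ∧ N.card * ε ^ (d : ℝ) ≤ C := fun _ h => h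
  choose! N hcov hcard using hs
  have : (𝓝 0 ⊓ 𝓟 s).NeBot := frequently_mem_iff_neBot.1 hfreq
  have hmem : ∀ᶠ ε in 𝓝 0 ⊓ 𝓟 s, ε ∈ s := eventually_inf_principal.2 (.of_forall fun _ h => h)
  have hradius : Tendsto (fun ε : ℝ≥0 => 2 * (ε : ℝ≥0∞)) (𝓝 0 ⊓ 𝓟 s) (𝓝 0) := by
    have h := ENNReal.Tendsto.const_mul (a := 2) (ENNReal.tendsto_coe.2 (tendsto_id (x := 𝓝 0)))
      (.inr ENNReal.ofNat_ne_top)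
    rw [ENNReal.coe_zero, mul_zero] at h
    exact h.mono_left inf_le_left
  have hfinite : μH[d] K ≤ 2 ^ (d : ℝ) * (C : ℝ≥0∞) := calc
    μH[d] K ≤ liminf (fun ε => ∑ x : N ε, ediam (closedEBall x.1 ε) ^ (d : ℝ)) (𝓝 0 ⊓ 𝓟 s) := by
      refine Measure.hausdorffMeasure_le_liminf_sum _ _ _ hradius _
        (.of_forall fun ε x => ediam_closedEBall_le) (hmem.mono fun ε hε => ?_)
      simpa only [isCover_iff_subset_iUnion_closedEBall, Finset.mem_coe, iUnion_subtype]
        using hcov ε hε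
    _ ≤ liminf (fun _ => 2 ^ (d : ℝ) * (C : ℝ≥0∞)) (𝓝 0 ⊓ 𝓟 s) :=
      liminf_le_liminf (hmem.mono fun ε hε =>
        (sum_ediam_closedEBall_rpow_le (N ε) ε d).trans (by gcongr; exact hcard ε hε))
    _ = 2 ^ (d : ℝ) * (C : ℝ≥0∞) := liminf_const _
  rw [hausdorffMeasure_of_lt_dimH hd] at hfinite
  exact absurd (top_le_iff.1 hfinite) (ENNReal.mul_ne_top
    (ENNReal.rpow_ne_top_of_nonneg d.coe_nonneg ENNReal.ofNat_ne_top) ENNReal.coe_ne_top)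

lemma exists_nat_forall_isCover_two_le_card_mul_rpow {K : Set E} {d : ℝ≥0}
    (hd : d < dimH K) (D : ℝ≥0) {e : ℝ≥0} (he : 0 < e) :
    ∃ m : ℕ, 1 < m ∧ e / m < 1 ∧ ∀ N : Finset E,
      IsCover ((3 * D + e) / m) K N → 2 ≤ N.card * (e / m) ^ (d : ℝ) := by
  set s := (3 * D + e) / e
  have hs : 0 < s ^ (d : ℝ) := NNReal.rpow_pos (by positivity)
  have hscale (a : ℝ≥0) : Tendsto (fun m : ℕ => a / m) atTop (𝓝 0) :=
    tendsto_const_div_atTop_nhds_zero_nat a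
  obtain ⟨m, ⟨hm, hem⟩, hcard⟩ := ((eventually_gt_atTop 1).and
    ((hscale e).eventually_lt_const one_pos)).and
    ((hscale (3 * D + e)).eventually (eventually_forall_isCover_lt_card hd (2 * s ^ (d : ℝ))))
    |>.exists
  refine ⟨m, hm, hem, fun N hN => ?_⟩
  have h := hcard N hN
  rw [show (3 * D + e) / m = s * (e / m) by simp only [s]; field_simp, NNReal.mul_rpow,
    mul_left_comm, mul_comm] at h
  exact (lt_of_mul_lt_mul_left h hs.le).le

variable [MeasurableSpace E]

/-- The lower Hausdorff dimension of a measure: the infimum of the dimensions of the measurable sets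
it charges. This is `dimOf` on an arbitrary metric space. -/
def lowerDim (μ : Measure E) : ℝ≥0∞ :=
  ⨅ (X : Set E) (_ : MeasurableSet X) (_ : 0 < μ X), dimH X

lemma lowerDim_le_dimH_of_ae_mem {μ : Measure E} [NeZero μ] {K : Set E} (hK : MeasurableSet K)
    (hμK : ∀ᵐ x ∂μ, x ∈ K) : lowerDim μ ≤ dimH K := by
  have hpos : 0 < μ K := by
    have hfull : μ K = μ univ := measure_congr (eventuallyEq_univ.2 hμK)
    rw [hfull]
    exact Measure.measure_univ_pos.2 (NeZero.ne μ)
  exact iInf_le_of_le K (iInf₂_le hK hpos)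

variable [BorelSpace E]

lemma le_dimH_of_measure_le_mul_ediam_rpow {μ : Measure E} {C : ℝ≥0∞} (hC : C ≠ 0) {d : ℝ≥0}
    (h : ∀ s, ediam s ≤ 1 → C * μ s ≤ ediam s ^ (d : ℝ)) {X : Set E} (hX : 0 < μ X) :
    d ≤ dimH X := by
  have hle : C • μ ≤ μH[d] := Measure.le_hausdorffMeasure _ _ 1 one_pos h
  exact le_dimH_of_hausdorffMeasure_ne_zero
    ((ENNReal.mul_pos hC hX.ne').trans_le (hle X)).ne'

lemma mul_measure_le_ediam_rpow {μ : Measure E} {κ : ℝ≥0} (hκ0 : 0 < κ) (hκ1 : κ < 1) {d : ℝ≥0}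
    (hd : 0 < d)
    (h : ∀ (k : ℕ) (B : Set E), MeasurableSet B → ediam B ≤ (κ ^ k : ℝ≥0) →
      μ B ≤ ((κ ^ k) ^ (d : ℝ) : ℝ≥0))
    {s : Set E} (hs : ediam s ≤ 1) : (κ ^ (d : ℝ) : ℝ≥0) * μ s ≤ ediam s ^ (d : ℝ) := by
  have hclosure (k : ℕ) (hk : ediam s ≤ (κ ^ k : ℝ≥0)) : μ s ≤ ((κ ^ k) ^ (d : ℝ) : ℝ≥0) :=
    (measure_mono subset_closure).trans
      (h k _ isClosed_closure.measurableSet (by rwa [ediam_closure]))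
  lift ediam s to ℝ≥0 using (hs.trans_lt ENNReal.one_lt_top).ne with δ
  simp only [ENNReal.coe_le_coe] at hclosure
  rcases eq_zero_or_pos δ with rfl | hδ
  · have hlim : Tendsto (fun k : ℕ => (((κ ^ k) ^ (d : ℝ) : ℝ≥0) : ℝ≥0∞)) atTop (𝓝 0) := by
      refine ENNReal.tendsto_coe.2 ?_
      have hpow := (NNReal.continuous_rpow_const d.coe_nonneg).continuousAt.tendsto.comp
        (tendsto_pow_atTop_nhds_zero_of_lt_one (zero_le (a := κ)) hκ1)
      rwa [NNReal.zero_rpow (NNReal.coe_pos.2 hd).ne'] at hpow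
    have hzero : μ s ≤ 0 := ge_of_tendsto' hlim fun k => hclosure k zero_le
    simp [le_antisymm hzero zero_le]
  · obtain ⟨k, hlt, hle⟩ := exists_nat_pow_near_of_lt_one hδ (by exact_mod_cast hs) hκ0 hκ1
    calc (κ ^ (d : ℝ) : ℝ≥0) * μ s
        ≤ (κ ^ (d : ℝ) : ℝ≥0) * ((κ ^ k) ^ (d : ℝ) : ℝ≥0) := by gcongr; exact hclosure k hle
      _ = ((κ ^ (k + 1)) ^ (d : ℝ) : ℝ≥0) := by
        rw [← ENNReal.coe_mul, ← NNReal.mul_rpow, pow_succ']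
      _ ≤ (δ ^ (d : ℝ) : ℝ≥0) := by gcongr
      _ = (δ : ℝ≥0∞) ^ (d : ℝ) := ENNReal.coe_rpow_of_nonneg _ d.coe_nonneg

lemma le_lowerDim_of_measure_le_rpow {μ : Measure E} {κ : ℝ≥0} (hκ0 : 0 < κ) (hκ1 : κ < 1)
    {d : ℝ≥0}
    (h : ∀ (k : ℕ) (B : Set E), MeasurableSet B → ediam B ≤ (κ ^ k : ℝ≥0) →
      μ B ≤ ((κ ^ k) ^ (d : ℝ) : ℝ≥0)) :
    d ≤ lowerDim μ := by
  rcases eq_zero_or_pos d with rfl | hd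
  · exact zero_le
  · exact le_iInf fun X => le_iInf₂ fun _ hX => le_dimH_of_measure_le_mul_ediam_rpow
      (ENNReal.coe_ne_zero.2 (NNReal.rpow_pos hκ0).ne')
      (fun _ => mul_measure_le_ediam_rpow hκ0 hκ1 hd h) hX

end HausdorffDimension

section BernoulliMeasure

variable {α : Type*}

/-- The sequence obtained by putting `a` in front of `ω`. -/
def seqCons (a : α) (ω : ℕ → α) : ℕ → α
  | 0 => a
  | k + 1 => ω k

variable [MeasurableSpace α]

lemma measurable_seqCons : Measurable fun x : α × (ℕ → α) => seqCons x.1 x.2 :=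
  measurable_pi_lambda _ fun
    | 0 => measurable_fst
    | k + 1 => (measurable_pi_apply k).comp measurable_snd

lemma map_seqCons_prod_infinitePi (ν : Measure α) [IsProbabilityMeasure ν] :
    (ν.prod (Measure.infinitePi fun _ : ℕ => ν)).map (fun x => seqCons x.1 x.2) =
      Measure.infinitePi fun _ => ν := by
  refine Measure.eq_infinitePi _ fun s t ht => ?_
  set tail : Finset ℕ := (s.erase 0).preimage Nat.succ Nat.succ_injective.injOn
  have hpreimage : (fun x : α × (ℕ → α) => seqCons x.1 x.2) ⁻¹' (s : Set ℕ).pi t =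
      {a | 0 ∈ s → a ∈ t 0} ×ˢ (tail : Set ℕ).pi fun k => t (k + 1) := by
    ext ⟨a, ω⟩
    refine (Nat.and_forall_add_one (p := fun k => k ∈ s → seqCons a ω k ∈ t k)).symm.trans ?_
    simp [tail, seqCons, Set.mem_pi]
  have hprod : ∏ k ∈ tail, ν (t (k + 1)) = ∏ k ∈ s.erase 0, ν (t k) :=
    Finset.prod_preimage _ _ _ (fun k => ν (t k)) fun k hk hk' =>
      absurd ⟨k - 1, Nat.succ_pred (Finset.ne_of_mem_erase hk)⟩ hk'
  rw [Measure.map_apply measurable_seqCons (.pi s.countable_toSet fun k _ => ht k), hpreimage,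
    Measure.prod_prod, Measure.infinitePi_pi _ fun k _ => ht (k + 1), hprod]
  by_cases h0 : 0 ∈ s
  · simp only [h0, forall_const, ofPred_mem_eq, Finset.mul_prod_erase s (fun k => ν (t k)) h0]
  · simp only [h0, IsEmpty.forall_iff, ofPred_true, measure_univ, one_mul,
      Finset.erase_eq_of_notMem h0]

end BernoulliMeasure

section SelfSimilarMeasure

variable {α E : Type*} [MeasurableSpace E]

/-- Invariance of a measure under the random iteration that applies the map `g a` with
probability `p a`. That `p` is a probability vector is not part of the definition. -/
def IsSelfSimilarMeasure (g : α → E → E) (p : α → ℝ≥0∞) (μ : Measure E) : Prop :=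
  μ = Measure.sum fun a => p a • μ.map (g a)

variable {g : α → E → E}

lemma IsSelfSimilarMeasure.apply_eq_tsum {p : α → ℝ≥0∞} {μ : Measure E}
    (hμ : IsSelfSimilarMeasure g p μ) (hg : ∀ a, Measurable (g a)) {A : Set E}
    (hA : MeasurableSet A) : μ A = ∑' a, p a * μ (g a ⁻¹' A) := by
  conv_lhs => rw [hμ]
  simp_rw [Measure.sum_apply _ hA, Measure.smul_apply, smul_eq_mul, Measure.map_apply (hg _) hA]

lemma isSelfSimilarMeasure_map_infinitePi [Countable α] [MeasurableSpace α]
    [MeasurableSingletonClass α] (hg : ∀ a, Measurable (g a)) (ν : Measure α)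
    [IsProbabilityMeasure ν] {π : (ℕ → α) → E} (hπ : Measurable π)
    (hπ_cons : ∀ a ω, π (seqCons a ω) = g a (π ω)) :
    IsSelfSimilarMeasure g (fun a => ν {a}) ((Measure.infinitePi fun _ => ν).map π) := by
  set P : Measure (ℕ → α) := Measure.infinitePi fun _ => ν
  refine Measure.ext fun A hA => ?_
  calc P.map π A
      = (ν.prod P).map (fun x => seqCons x.1 x.2) (π ⁻¹' A) := by
        rw [map_seqCons_prod_infinitePi, Measure.map_apply hπ hA]
    _ = ∫⁻ a, P ((fun ω => π (seqCons a ω)) ⁻¹' A) ∂ν := by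
        rw [Measure.map_apply measurable_seqCons (hπ hA),
          Measure.prod_apply (measurable_seqCons (hπ hA))]
        rfl
    _ = ∑' a, ν {a} * P.map π (g a ⁻¹' A) := by
        simp_rw [lintegral_countable', hπ_cons, Measure.map_apply hπ (hg _ hA), mul_comm]
        rfl
    _ = Measure.sum (fun a => ν {a} • (P.map π).map (g a)) A := by
        simp_rw [Measure.sum_apply _ hA, Measure.smul_apply, smul_eq_mul,
          Measure.map_apply (hg _) hA]

end SelfSimilarMeasure

section Coding

open Metric
open scoped NNReal

variable {α E : Type*}

/-- The point `g (ω 0) (⋯ (g (ω (k - 1)) x₀))`, the `k`-th approximation of the point of the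
attractor with address `ω`. -/
def codingSeq (g : α → E → E) (x₀ : E) : ℕ → (ℕ → α) → E
  | 0, _ => x₀
  | k + 1, ω => g (ω 0) (codingSeq g x₀ k fun j => ω (j + 1))

variable {g : α → E → E} {c : ℝ≥0} {K : Set E} {x₀ : E}

lemma codingSeq_mem (hgK : ∀ a, MapsTo (g a) K K) (hx₀ : x₀ ∈ K) (k : ℕ) (ω : ℕ → α) :
    codingSeq g x₀ k ω ∈ K := by
  induction k generalizing ω with
  | zero => exact hx₀
  | succ k ih => exact hgK _ (ih _)

lemma measurable_codingSeq [MeasurableSpace E] [Countable α] [MeasurableSpace α]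
    [MeasurableSingletonClass α] (hg : ∀ a, Measurable (g a)) (k : ℕ) :
    Measurable (codingSeq g x₀ k) := by
  induction k with
  | zero => exact measurable_const
  | succ k ih =>
    have hpair : Measurable fun ω : ℕ → α => (ω 0, codingSeq g x₀ k fun j => ω (j + 1)) :=
      (measurable_pi_apply 0).prodMk
        (ih.comp (measurable_pi_lambda _ fun j => measurable_pi_apply (j + 1)))
    exact (measurable_from_prod_countable_right (f := fun x : α × E => g x.1 x.2) hg).comp hpair

variable [EMetricSpace E]

lemma edist_codingSeq_succ_le (hg : ∀ a, LipschitzWith c (g a)) (hgK : ∀ a, MapsTo (g a) K K)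
    (hx₀ : x₀ ∈ K) (k : ℕ) (ω : ℕ → α) :
    edist (codingSeq g x₀ k ω) (codingSeq g x₀ (k + 1) ω) ≤ ediam K * c ^ k := by
  induction k generalizing ω with
  | zero =>
    rw [pow_zero, mul_one]
    exact edist_le_ediam_of_mem hx₀ (hgK (ω 0) hx₀)
  | succ k ih => calc
      edist (codingSeq g x₀ (k + 1) ω) (codingSeq g x₀ (k + 2) ω)
        ≤ c * (ediam K * c ^ k) := (hg _ _ _).trans (by gcongr; exact ih _)
      _ = ediam K * c ^ (k + 1) := by ring

lemma exists_tendsto_codingSeq (hg : ∀ a, ContractingWith c (g a)) (hK : IsComplete K)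
    (hK' : ediam K ≠ ∞) (hgK : ∀ a, MapsTo (g a) K K) (hx₀ : x₀ ∈ K) (ω : ℕ → α) :
    ∃ x, Tendsto (codingSeq g x₀ · ω) atTop (𝓝 x) := by
  have hcauchy : CauchySeq (codingSeq g x₀ · ω) :=
    cauchySeq_of_edist_le_geometric c _ (ENNReal.coe_lt_one_iff.2 (hg (ω 0)).1) hK'
      fun k => edist_codingSeq_succ_le (fun a => (hg a).2) hgK hx₀ k ω
  obtain ⟨x, -, hx⟩ := cauchySeq_tendsto_of_isComplete hK (codingSeq_mem hgK hx₀ · ω) hcauchy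
  exact ⟨x, hx⟩

variable [MeasurableSpace E] [BorelSpace E] [Countable α]

lemma exists_measurable_coding [MeasurableSpace α] [MeasurableSingletonClass α]
    (hg : ∀ a, ContractingWith c (g a)) (hK : IsComplete K) (hK' : ediam K ≠ ∞)
    (hKne : K.Nonempty) (hgK : ∀ a, MapsTo (g a) K K) :
    ∃ π : (ℕ → α) → E, Measurable π ∧ ∀ a ω, π (seqCons a ω) = g a (π ω) := by
  obtain ⟨x₀, hx₀⟩ := hKne
  choose π hπ using exists_tendsto_codingSeq hg hK hK' hgK hx₀
  have hg_cont (a : α) : Continuous (g a) := (hg a).2.continuous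
  refine ⟨π, measurable_of_tendsto_metrizable
    (measurable_codingSeq fun a => (hg_cont a).measurable) (tendsto_pi_nhds.2 hπ), fun a ω => ?_⟩
  exact tendsto_nhds_unique ((tendsto_add_atTop_iff_nat 1).2 (hπ (seqCons a ω)))
    (((hg_cont a).tendsto _).comp (hπ ω))

lemma exists_isSelfSimilarMeasure (hg : ∀ a, ContractingWith c (g a)) (hK : IsComplete K)
    (hK' : ediam K ≠ ∞) (hKne : K.Nonempty) (hgK : ∀ a, MapsTo (g a) K K) {p : α → ℝ≥0∞}
    (hp : ∑' a, p a = 1) :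
    ∃ μ : Measure E, IsProbabilityMeasure μ ∧ IsSelfSimilarMeasure g p μ := by
  let _ : MeasurableSpace α := ⊤
  obtain ⟨π, hπ, hπ_cons⟩ := exists_measurable_coding hg hK hK' hKne hgK
  let q : PMF α := ⟨p, ENNReal.summable.hasSum_iff.2 hp⟩
  have hq (a : α) : q.toMeasure {a} = p a :=
    q.toMeasure_apply_singleton a (measurableSet_singleton a)
  have hμ := isSelfSimilarMeasure_map_infinitePi (fun a => (hg a).2.continuous.measurable)
    q.toMeasure hπ hπ_cons
  simp only [hq] at hμ
  exact ⟨_, Measure.isProbabilityMeasure_map hπ.aemeasurable, hμ⟩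

end Coding

lemma mapsTo_of_eq_iUnion_image {α E : Type*} {g : α → E → E} {K : Set E}
    (hKg : K = ⋃ a, g a '' K) (a : α) : MapsTo (g a) K K :=
  mapsTo_iff_image_subset.2 ((subset_iUnion (g · '' K) a).trans_eq hKg.symm)

section Support

open Metric
open scoped NNReal

variable {α : Type*} {c : ℝ≥0} {p : α → ℝ≥0∞}

section Thickening

variable {E : Type*} [PseudoEMetricSpace E] {K : Set E}

lemma mapsTo_cthickening {u : E → E} (hu : LipschitzWith c u) (hK : IsCompact K)
    (hKne : K.Nonempty) (huK : MapsTo u K K) (R : ℝ) :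
    MapsTo u (cthickening R K) (cthickening (c * R) K) := by
  intro x hx
  obtain ⟨y, hy, hxy⟩ := hK.exists_infEDist_eq_edist hKne x
  calc infEDist (u x) K
      ≤ edist (u x) (u y) := infEDist_le_edist_of_mem (huK hy)
    _ ≤ c * infEDist x K := hxy ▸ hu x y
    _ ≤ c * ENNReal.ofReal R := by gcongr; exact hx
    _ = ENNReal.ofReal (c * R) := by
      rw [ENNReal.ofReal_mul c.coe_nonneg, ENNReal.ofReal_coe_nnreal]

lemma IsSelfSimilarMeasure.measure_cthickening_le [MeasurableSpace E] [BorelSpace E]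
    {g : α → E → E} {μ : Measure E} (hμ : IsSelfSimilarMeasure g p μ) (hp : ∑' a, p a = 1)
    (hg : ∀ a, LipschitzWith c (g a)) (hK : IsCompact K) (hKne : K.Nonempty)
    (hgK : ∀ a, MapsTo (g a) K K) (R : ℝ) (k : ℕ) :
    μ (cthickening R K) ≤ μ (cthickening (c ^ k * R) K) := by
  induction k with
  | zero => rw [pow_zero, one_mul]
  | succ k ih => calc
      μ (cthickening R K)
        ≤ ∑' a, p a * μ (cthickening (c ^ k * R) K) := by rwa [ENNReal.tsum_mul_right, hp, one_mul]
      _ ≤ ∑' a, p a * μ (g a ⁻¹' cthickening (c * (c ^ k * R)) K) := by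
        gcongr with a
        exact mapsTo_cthickening (hg a) hK hKne (hgK a) _
      _ = μ (cthickening (c ^ (k + 1) * R) K) := by
        rw [← hμ.apply_eq_tsum (fun a => (hg a).continuous.measurable)
          isClosed_cthickening.measurableSet, pow_succ', mul_assoc]

end Thickening

lemma IsSelfSimilarMeasure.ae_mem {E : Type*} [MetricSpace E] [MeasurableSpace E] [BorelSpace E]
    {g : α → E → E} {K : Set E} {μ : Measure E} [IsFiniteMeasure μ]
    (hμ : IsSelfSimilarMeasure g p μ) (hp : ∑' a, p a = 1) (hg : ∀ a, ContractingWith c (g a))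
    (hK : IsCompact K) (hKne : K.Nonempty) (hgK : ∀ a, MapsTo (g a) K K) : ∀ᵐ x ∂μ, x ∈ K := by
  obtain ⟨a⟩ : Nonempty α := by
    by_contra! h
    simp at hp
  have hle (N : ℕ) : μ (cthickening N K) ≤ μ K := by
    have hradius : Tendsto (fun k : ℕ => (c ^ k * N : ℝ)) atTop (𝓝 0) := by
      simpa using (tendsto_pow_atTop_nhds_zero_of_lt_one c.coe_nonneg (hg a).1).mul_const (N : ℝ)
    have hthick := tendsto_measure_cthickening_of_isClosed (μ := μ)
      ⟨1, one_pos, measure_ne_top _ _⟩ hK.isClosed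
    exact ge_of_tendsto' (hthick.comp hradius)
      (hμ.measure_cthickening_le hp (fun a => (hg a).2) hK hKne hgK N)
  have hunion : ⋃ N : ℕ, cthickening N K = univ := by
    obtain ⟨y, hy⟩ := hKne
    refine eq_univ_of_forall fun x => ?_
    obtain ⟨N, hN⟩ := exists_nat_ge (dist x y)
    exact mem_iUnion.2 ⟨N, mem_cthickening_of_dist_le _ y _ _ hy hN⟩
  have hmono : Monotone fun N : ℕ => cthickening N K :=
    fun i j hij => cthickening_mono (by exact_mod_cast hij) K
  have hlim := tendsto_measure_iUnion_atTop (μ := μ) hmono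
  rw [hunion] at hlim
  rw [ae_mem_iff_measure_eq hK.measurableSet.nullMeasurableSet]
  exact le_antisymm (measure_mono (subset_univ K)) (le_of_tendsto' hlim hle)

end Support

section SeparatedFamily

open Metric
open scoped NNReal

variable {α : Type*}

section Weight

variable [Fintype α]

/-- The weights used to find a measure of large dimension: most of the mass is spread evenly over
`S`, and a total of `(#S + 1)⁻¹` over all of `α`, so that every weight is positive. -/
def separatedWeight (S : Finset α) (a : α) : ℝ≥0∞ :=
  (S.card + 1 : ℝ≥0∞)⁻¹ * ((S : Set α).indicator 1 a + (Fintype.card α : ℝ≥0∞)⁻¹)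

lemma separatedWeight_pos (S : Finset α) (a : α) : 0 < separatedWeight S a :=
  ENNReal.mul_pos (ENNReal.inv_ne_zero.2 (by finiteness)) (by simp)

lemma sum_separatedWeight_mul (S : Finset α) (u : α → ℝ≥0∞) :
    ∑ a, separatedWeight S a * u a =
      (S.card + 1 : ℝ≥0∞)⁻¹ * (∑ a ∈ S, u a + (Fintype.card α : ℝ≥0∞)⁻¹ * ∑ a, u a) := by
  classical
  have hS : ∑ a, (S : Set α).indicator 1 a * u a = ∑ a ∈ S, u a := by
    simp [Set.indicator_apply, ite_mul]
  simp only [separatedWeight, mul_assoc, add_mul, ← Finset.mul_sum, Finset.sum_add_distrib, hS]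

lemma sum_separatedWeight [Nonempty α] (S : Finset α) : ∑ a, separatedWeight S a = 1 := by
  have h := sum_separatedWeight_mul S fun _ => 1
  simp only [mul_one, Finset.sum_const, nsmul_eq_mul, Finset.card_univ] at h
  rw [h, ENNReal.inv_mul_cancel (by simp) (by finiteness),
    ENNReal.inv_mul_cancel (by simp) (by finiteness)]

lemma sum_separatedWeight_mul_le {S : Finset α} {u : α → ℝ≥0∞} {b : ℝ≥0∞}
    (hS : ∑ a ∈ S, u a ≤ b) (hu : ∀ a, u a ≤ b) :
    ∑ a, separatedWeight S a * u a ≤ 2 / (S.card + 1) * b := by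
  have hmean : (Fintype.card α : ℝ≥0∞)⁻¹ * ∑ a, u a ≤ b := by
    rw [mul_comm, ← div_eq_mul_inv]
    refine ENNReal.div_le_of_le_mul' ?_
    exact (Finset.sum_le_card_nsmul _ _ b fun a _ => hu a).trans_eq (nsmul_eq_mul _ _)
  calc ∑ a, separatedWeight S a * u a
      ≤ (S.card + 1 : ℝ≥0∞)⁻¹ * (b + b) := by rw [sum_separatedWeight_mul]; gcongr
    _ = 2 / (S.card + 1) * b := by rw [div_eq_mul_inv]; ring

end Weight

lemma exists_finset_pairwise_lt_edist_forall_exists_edist_le {E : Type*} [PseudoEMetricSpace E]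
    [Finite α] (z : α → E) (δ : ℝ≥0∞) :
    ∃ S : Finset α, (S : Set α).Pairwise (fun a b => δ < edist (z a) (z b)) ∧
      ∀ a, ∃ b ∈ S, edist (z a) (z b) ≤ δ := by
  classical
  obtain ⟨S, hS⟩ := (Set.toFinite
    {S : Finset α | (S : Set α).Pairwise fun a b => δ < edist (z a) (z b)}).exists_maximal
    ⟨∅, by simp⟩
  refine ⟨S, hS.prop, fun a => ?_⟩
  by_contra! hfar
  have hinsert : ((insert a S : Finset α) : Set α).Pairwise
      fun a b => δ < edist (z a) (z b) := by
    rw [Finset.coe_insert]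
    refine hS.prop.insert fun b hb _ => ⟨hfar b hb, ?_⟩
    rw [edist_comm]
    exact hfar b hb
  have ha : a ∈ S := hS.le_of_ge hinsert (Finset.subset_insert a S) (Finset.mem_insert_self a S)
  exact absurd (hfar a ha) (by simp)

section LocalDecay

variable {E : Type*} [PseudoEMetricSpace E] {g : α → E → E} {K : Set E} {x₀ : E} {D L κ : ℝ≥0}

lemma isCover_image_of_forall_exists_edist_le {S : Finset α} {δ : ℝ≥0}
    (hKg : K ⊆ ⋃ a, g a '' K) (hg : ∀ a, LipschitzWith L (g a))
    (hKD : ediam K ≤ D) (hx₀ : x₀ ∈ K) (hS : ∀ a, ∃ b ∈ S, edist (g a x₀) (g b x₀) ≤ δ) :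
    IsCover (L * D + δ) K ((g · x₀) '' S) := by
  intro x hx
  obtain ⟨a, y, hy, rfl⟩ := mem_iUnion.1 (hKg hx)
  obtain ⟨b, hb, hab⟩ := hS a
  refine ⟨g b x₀, ⟨b, hb, rfl⟩, ?_⟩
  calc edist (g a y) (g b x₀)
      ≤ edist (g a y) (g a x₀) + edist (g a x₀) (g b x₀) := edist_triangle _ _ _
    _ ≤ L * D + δ := by
      gcongr
      exact (hg a y x₀).trans (by gcongr; exact (edist_le_ediam_of_mem hy hx₀).trans hKD)

variable [MeasurableSpace E] {μ : Measure E}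

lemma edist_le_of_measure_preimage_ne_zero (hμK : ∀ᵐ x ∂μ, x ∈ K) (hKD : ediam K ≤ D)
    (hx₀ : x₀ ∈ K) {u v : E → E} (hu : LipschitzWith L u) (hv : LipschitzWith L v) {B : Set E}
    (huB : μ (u ⁻¹' B) ≠ 0) (hvB : μ (v ⁻¹' B) ≠ 0) :
    edist (u x₀) (v x₀) ≤ 2 * (L * D) + ediam B := by
  obtain ⟨y, hyB, hy⟩ := ((frequently_ae_mem_iff.2 huB).and_eventually hμK).exists
  obtain ⟨z, hzB, hz⟩ := ((frequently_ae_mem_iff.2 hvB).and_eventually hμK).exists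
  have hnear {w : E → E} (hw : LipschitzWith L w) {x y : E} (hx : x ∈ K) (hy : y ∈ K) :
      edist (w x) (w y) ≤ L * D :=
    (hw x y).trans (by gcongr; exact (edist_le_ediam_of_mem hx hy).trans hKD)
  calc edist (u x₀) (v x₀)
      ≤ edist (u x₀) (u y) + edist (u y) (v z) + edist (v z) (v x₀) := edist_triangle4 _ _ _ _
    _ ≤ L * D + ediam B + L * D := by
      gcongr
      exacts [hnear hu hx₀ hy, edist_le_ediam_of_mem hyB hzB, hnear hv hz hx₀]
    _ = 2 * (L * D) + ediam B := by ring

lemma sum_le_of_pairwise_eq_zero {u : α → ℝ≥0∞} {b : ℝ≥0∞} {S : Finset α}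
    (hS : (S : Set α).Pairwise fun a a' => u a = 0 ∨ u a' = 0) (hu : ∀ a ∈ S, u a ≤ b) :
    ∑ a ∈ S, u a ≤ b := by
  by_cases hne : ∃ a ∈ S, u a ≠ 0
  · obtain ⟨a, haS, ha⟩ := hne
    rw [Finset.sum_eq_single_of_mem a haS fun a' ha' haa' =>
      (hS haS ha' haa'.symm).resolve_left ha]
    exact hu a haS
  · push Not at hne
    rw [Finset.sum_eq_zero hne]
    exact zero_le

variable [BorelSpace E]

-- Preimages under the maps enlarge the scale by at most `κ⁻¹`, and at each step a set of small
-- diameter is charged by at most one of the images of `K` under the maps of `S`.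
lemma IsSelfSimilarMeasure.measure_le_pow [Fintype α] {S : Finset α} [IsProbabilityMeasure μ]
    (hμ : IsSelfSimilarMeasure g (separatedWeight S) μ) (hμK : ∀ᵐ x ∂μ, x ∈ K)
    (hg : ∀ a, LipschitzWith L (g a)) (hg' : ∀ a, AntilipschitzWith κ⁻¹ (g a)) (hκ : κ ≤ 1)
    (hKD : ediam K ≤ D) (hx₀ : x₀ ∈ K)
    (hS : (S : Set α).Pairwise fun a b => (2 * (L * D) + κ : ℝ≥0) < edist (g a x₀) (g b x₀))
    (k : ℕ) {B : Set E} (hB : MeasurableSet B) (hBκ : ediam B ≤ (κ ^ k : ℝ≥0)) :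
    μ B ≤ (2 / (S.card + 1)) ^ k := by
  induction k generalizing B with
  | zero => simpa using prob_le_one
  | succ k ih =>
    have hg_meas (a : α) : Measurable (g a) := (hg a).continuous.measurable
    have hpreimage (a : α) : ediam (g a ⁻¹' B) ≤ (κ ^ k : ℝ≥0) := by
      refine ((hg' a).ediam_preimage_le B).trans ((mul_le_mul_right hBκ _).trans ?_)
      rw [← ENNReal.coe_mul, ENNReal.coe_le_coe, pow_succ', ← mul_assoc]
      exact mul_le_of_le_one_left' inv_mul_le_one
    have hBκ' : ediam B ≤ κ := hBκ.trans <| by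
      rw [ENNReal.coe_le_coe, pow_succ]
      exact mul_le_of_le_one_left' (pow_le_one₀ zero_le hκ)
    have hle (a : α) : μ (g a ⁻¹' B) ≤ (2 / (S.card + 1)) ^ k :=
      ih (hg_meas a hB) (hpreimage a)
    have hsum : ∑ a ∈ S, μ (g a ⁻¹' B) ≤ (2 / (S.card + 1)) ^ k := by
      refine sum_le_of_pairwise_eq_zero (fun a ha b hb hab => ?_) fun a _ => hle a
      by_contra! hcharged
      refine (hS ha hb hab).not_ge ?_
      calc edist (g a x₀) (g b x₀)
          ≤ 2 * (L * D) + ediam B := edist_le_of_measure_preimage_ne_zero hμK hKD hx₀ (hg a) (hg b)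
            hcharged.1 hcharged.2
        _ ≤ (2 * (L * D) + κ : ℝ≥0) := by push_cast; gcongr
    calc μ B = ∑ a, separatedWeight S a * μ (g a ⁻¹' B) := by
          rw [hμ.apply_eq_tsum hg_meas hB, tsum_fintype]
      _ ≤ (2 / (S.card + 1)) ^ (k + 1) := by
          rw [pow_succ']
          exact sum_separatedWeight_mul_le hsum hle

end LocalDecay

variable {E : Type*} [MetricSpace E] [MeasurableSpace E] [BorelSpace E] {g : α → E → E}
  {K : Set E} {x₀ : E} {D L κ : ℝ≥0}

lemma exists_isSelfSimilarMeasure_le_lowerDim [Fintype α] [Nonempty α] {S : Finset α}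
    (hg : ∀ a, LipschitzWith L (g a)) (hL : L < 1)
    (hg' : ∀ a, AntilipschitzWith κ⁻¹ (g a)) (hκ0 : 0 < κ) (hκ1 : κ < 1) (hK : IsCompact K)
    (hgK : ∀ a, MapsTo (g a) K K) (hKD : ediam K ≤ D) (hx₀ : x₀ ∈ K)
    (hS : (S : Set α).Pairwise fun a b => (2 * (L * D) + κ : ℝ≥0) < edist (g a x₀) (g b x₀))
    {d : ℝ≥0} (hSd : 2 ≤ S.card * κ ^ (d : ℝ)) :
    ∃ μ : Measure E, IsProbabilityMeasure μ ∧ IsSelfSimilarMeasure g (separatedWeight S) μ ∧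
      d ≤ lowerDim μ := by
  have hg_contr (a : α) : ContractingWith L (g a) := ⟨hL, hg a⟩
  have hp : ∑' a, separatedWeight S a = 1 := by rw [tsum_fintype, sum_separatedWeight]
  obtain ⟨μ, hμ_prob, hμ⟩ := exists_isSelfSimilarMeasure hg_contr hK.isComplete
    hK.isBounded.ediam_ne_top ⟨x₀, hx₀⟩ hgK hp
  have hμK : ∀ᵐ x ∂μ, x ∈ K := hμ.ae_mem hp hg_contr hK ⟨x₀, hx₀⟩ hgK
  have hbase : 2 / (S.card + 1 : ℝ≥0∞) ≤ (κ ^ (d : ℝ) : ℝ≥0) := by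
    refine ENNReal.div_le_of_le_mul' ?_
    calc (2 : ℝ≥0∞) ≤ (S.card * κ ^ (d : ℝ) : ℝ≥0) := by exact_mod_cast hSd
      _ ≤ (S.card + 1) * (κ ^ (d : ℝ) : ℝ≥0) := by push_cast; gcongr; exact le_self_add
  refine ⟨μ, hμ_prob, hμ, le_lowerDim_of_measure_le_rpow hκ0 hκ1 fun k B hB hBκ => ?_⟩
  calc μ B ≤ (2 / (S.card + 1)) ^ k := hμ.measure_le_pow hμK hg hg' hκ1.le hKD hx₀ hS k hB hBκ
    _ ≤ (κ ^ (d : ℝ) : ℝ≥0) ^ k := by gcongr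
    _ = ((κ ^ k) ^ (d : ℝ) : ℝ≥0) := by
      rw [← ENNReal.coe_pow, ← NNReal.rpow_natCast, ← NNReal.rpow_mul, mul_comm, NNReal.rpow_mul,
        NNReal.rpow_natCast]

lemma exists_le_lowerDim_of_forall_isCover [Finite α] (hg : ∀ a, LipschitzWith L (g a))
    (hL : L < 1) (hg' : ∀ a, AntilipschitzWith κ⁻¹ (g a)) (hκ0 : 0 < κ) (hκ1 : κ < 1)
    (hK : IsCompact K) (hKne : K.Nonempty) (hKg : K = ⋃ a, g a '' K) (hKD : ediam K ≤ D) {d : ℝ≥0}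
    (hcover : ∀ N : Finset E, IsCover (3 * (L * D) + κ) K N → 2 ≤ N.card * κ ^ (d : ℝ)) :
    ∃ p : α → ℝ≥0∞, (∀ a, 0 < p a) ∧ ∑' a, p a = 1 ∧
      ∃ μ : Measure E, IsProbabilityMeasure μ ∧ IsSelfSimilarMeasure g p μ ∧ d ≤ lowerDim μ := by
  classical
  have := Fintype.ofFinite α
  obtain ⟨x₀, hx₀⟩ := hKne
  obtain ⟨a₀, -⟩ := mem_iUnion.1 (hKg.subset hx₀)
  have : Nonempty α := ⟨a₀⟩
  obtain ⟨S, hS, hSmax⟩ := exists_finset_pairwise_lt_edist_forall_exists_edist_le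
    (g · x₀) (2 * (L * D) + κ : ℝ≥0)
  have hScover : IsCover (3 * (L * D) + κ) K ((S.image (g · x₀) : Finset E) : Set E) := by
    rw [Finset.coe_image, show 3 * (L * D) + κ = L * D + (2 * (L * D) + κ) by ring]
    exact isCover_image_of_forall_exists_edist_le hKg.subset hg hKD hx₀ hSmax
  have hScard : 2 ≤ S.card * κ ^ (d : ℝ) :=
    (hcover _ hScover).trans (by gcongr; exact Finset.card_image_le)
  exact ⟨separatedWeight S, separatedWeight_pos S, by rw [tsum_fintype, sum_separatedWeight],
    exists_isSelfSimilarMeasure_le_lowerDim hg hL hg' hκ0 hκ1 hK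
      (mapsTo_of_eq_iUnion_image hKg) hKD hx₀ hS hScard⟩

end SeparatedFamily

section Words

variable {ι E : Type*}

/-- The composition `f i₁ ∘ ⋯ ∘ f i_ℓ` along the word `[i₁, …, i_ℓ]`. This is `compList` on an
arbitrary space. -/
def wordMap (f : ι → E → E) (w : List ι) (x : E) : E := w.foldr f x

lemma compList_eq_wordMap (f : ι → ℝ → ℝ) : compList f = wordMap f := by
  ext w x
  induction w with
  | nil => rfl
  | cons i w ih => exact congrArg (f i) ih

variable {f : ι → E → E} {K : Set E}

lemma wordMap_append (u v : List ι) (x : E) : wordMap f (u ++ v) x = wordMap f u (wordMap f v x) :=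
  List.foldr_append

lemma mapsTo_wordMap (hfK : ∀ i, MapsTo (f i) K K) (w : List ι) : MapsTo (wordMap f w) K K := by
  induction w with
  | nil => exact mapsTo_id K
  | cons i w ih => exact (hfK i).comp ih

lemma exists_length_eq_mem_image_wordMap (hfK : K ⊆ ⋃ i, f i '' K) (k : ℕ) {x : E} (hx : x ∈ K) :
    ∃ w : List ι, w.length = k ∧ x ∈ wordMap f w '' K := by
  induction k generalizing x with
  | zero => exact ⟨[], rfl, x, hx, rfl⟩
  | succ k ih =>
    obtain ⟨i, y, hy, rfl⟩ := mem_iUnion.1 (hfK hx)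
    obtain ⟨w, rfl, z, hz, rfl⟩ := ih hy
    exact ⟨i :: w, rfl, z, hz, rfl⟩

end Words

section RatioProd

open scoped NNReal

variable {n : ℕ} {r : Fin n → ℝ}

lemma ratioProd_cons (i : Fin n) (w : List (Fin n)) :
    ratioProd r (i :: w) = r i * ratioProd r w := List.prod_cons

lemma ratioProd_append_singleton (w : List (Fin n)) (i : Fin n) :
    ratioProd r (w ++ [i]) = ratioProd r w * r i := by
  simp only [ratioProd, List.map_append, List.prod_append, List.map_singleton, List.prod_singleton]

lemma ratioProd_nonneg (hr : ∀ i, 0 ≤ r i) (w : List (Fin n)) : 0 ≤ ratioProd r w :=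
  List.prod_nonneg (by simpa using fun i _ => hr i)

lemma ratioProd_le_pow_length (hr : ∀ i, 0 ≤ r i) {c : ℝ} (hrc : ∀ i, r i ≤ c)
    (w : List (Fin n)) : ratioProd r w ≤ c ^ w.length := by
  induction w with
  | nil => exact le_rfl
  | cons i w ih =>
    rw [ratioProd_cons, List.length_cons, pow_succ']
    exact mul_le_mul (hrc i) ih (ratioProd_nonneg hr w) ((hr i).trans (hrc i))

lemma exists_nnreal_lt_one_forall_le (hr : ∀ i, r i < 1) : ∃ c : ℝ≥0, c < 1 ∧ ∀ i, r i ≤ c :=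
  ⟨Finset.univ.sup fun i => (r i).toNNReal,
    (Finset.sup_lt_iff one_pos).2 fun i _ => Real.toNNReal_lt_one.2 (hr i),
    fun i => Real.toNNReal_le_iff_le_coe.1
      (Finset.le_sup (f := fun i => (r i).toNNReal) (Finset.mem_univ i))⟩

lemma exists_forall_ratioProd_lt (hr0 : ∀ i, 0 ≤ r i) (hr1 : ∀ i, r i < 1) {ε : ℝ} (hε : 0 < ε) :
    ∃ N, ∀ w : List (Fin n), N ≤ w.length → ratioProd r w < ε := by
  obtain ⟨c, hc, hrc⟩ := exists_nnreal_lt_one_forall_le hr1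
  obtain ⟨N, hN⟩ := exists_pow_lt_of_lt_one hε (NNReal.coe_lt_one.2 hc)
  exact ⟨N, fun w hw => (ratioProd_le_pow_length hr0 hrc w).trans_lt
    ((pow_le_pow_of_le_one c.coe_nonneg hc.le hw).trans_lt hN)⟩

end RatioProd

section Phim

variable {n : ℕ} {r : Fin n → ℝ} {m : ℕ}

lemma le_ratioProd_of_mem_Phim {e : ℝ} (he : 0 ≤ e) (hre : ∀ i, e ≤ r i) {w : List (Fin n)}
    (hw : w ∈ Phim r m) : e / m ≤ ratioProd r w := by
  obtain ⟨hne, -, hlast⟩ := hw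
  rw [← List.dropLast_append_getLast hne, ratioProd_append_singleton, div_eq_inv_mul, ← one_div]
  exact mul_le_mul hlast (hre _) he ((by positivity : (0 : ℝ) ≤ 1 / m).trans hlast)

lemma finite_Phim (hr0 : ∀ i, 0 ≤ r i) (hr1 : ∀ i, r i < 1) (hm : 1 ≤ m) : (Phim r m).Finite := by
  obtain ⟨N, hN⟩ := exists_forall_ratioProd_lt hr0 hr1
    (one_div_pos.2 (Nat.cast_pos.2 hm) : (0 : ℝ) < 1 / m)
  refine (List.finite_length_le (Fin n) N).subset fun w ⟨_, _, hlast⟩ => ?_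
  by_contra hlong
  refine (hN w.dropLast ?_).not_ge hlast
  rw [List.length_dropLast]
  exact Nat.le_sub_one_of_lt (not_le.1 hlong)

lemma exists_append_eq_mem_Phim (hm : 1 ≤ m) {w : List (Fin n)} (hw : ratioProd r w < 1 / m) :
    ∃ u v, u ++ v = w ∧ u ∈ Phim r m := by
  induction w using List.reverseRecOn with
  | nil =>
    have hle : (1 : ℝ) / m ≤ 1 := div_le_one_of_le₀ (Nat.one_le_cast.2 hm) m.cast_nonneg
    exact absurd hw hle.not_gt
  | append_singleton w i ih =>
    rcases lt_or_ge (ratioProd r w) (1 / m) with hshort | hlast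
    · obtain ⟨u, v, rfl, hu⟩ := ih hshort
      exact ⟨u, v ++ [i], (List.append_assoc u v [i]).symm, hu⟩
    · exact ⟨w ++ [i], [], List.append_nil _, by simp, hw, by rwa [List.dropLast_concat]⟩

lemma eq_iUnion_image_wordMap_Phim {E : Type*} {f : Fin n → E → E} {K : Set E}
    (hr0 : ∀ i, 0 ≤ r i) (hr1 : ∀ i, r i < 1) (hm : 1 ≤ m) (hKf : K = ⋃ i, f i '' K) :
    K = ⋃ w : Phim r m, wordMap f w '' K := by
  have hfK := mapsTo_wordMap (mapsTo_of_eq_iUnion_image hKf)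
  refine Subset.antisymm (fun x hx => ?_) (iUnion_subset fun w => (hfK w).image_subset)
  obtain ⟨N, hN⟩ := exists_forall_ratioProd_lt hr0 hr1
    (one_div_pos.2 (Nat.cast_pos.2 hm) : (0 : ℝ) < 1 / m)
  obtain ⟨w, hw, y, hy, rfl⟩ := exists_length_eq_mem_image_wordMap hKf.subset N hx
  obtain ⟨u, v, rfl, hu⟩ := exists_append_eq_mem_Phim hm (hN w hw.ge)
  exact mem_iUnion.2 ⟨⟨u, hu⟩, wordMap f v y, hfK v hy, (wordMap_append u v y).symm⟩

end Phim

section Similarities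

open Metric
open scoped NNReal

variable {n : ℕ} {r : Fin n → ℝ} {E : Type*} [MetricSpace E] {f : Fin n → E → E}

lemma dist_wordMap (hf : ∀ i x y, dist (f i x) (f i y) = r i * dist x y) (w : List (Fin n))
    (x y : E) : dist (wordMap f w x) (wordMap f w y) = ratioProd r w * dist x y := by
  induction w with
  | nil => exact (one_mul _).symm
  | cons i w ih => rw [ratioProd_cons, mul_assoc, ← ih]; exact hf i _ _

lemma lipschitzWith_wordMap (hf : ∀ i x y, dist (f i x) (f i y) = r i * dist x y)
    {w : List (Fin n)} {L : ℝ≥0} (hw : ratioProd r w ≤ L) : LipschitzWith L (wordMap f w) :=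
  .of_dist_le_mul fun x y => by rw [dist_wordMap hf]; gcongr

lemma antilipschitzWith_wordMap (hf : ∀ i x y, dist (f i x) (f i y) = r i * dist x y)
    {w : List (Fin n)} {κ : ℝ≥0} (hκ : 0 < κ) (hw : κ ≤ ratioProd r w) :
    AntilipschitzWith κ⁻¹ (wordMap f w) :=
  .of_le_mul_dist fun x y => by
    rw [dist_wordMap hf, NNReal.coe_inv, le_inv_mul_iff₀ (NNReal.coe_pos.2 hκ)]
    gcongr

variable [MeasurableSpace E] [BorelSpace E] {K : Set E}

lemma lowerDim_le_dimH_of_isSelfSimilarMeasure_wordMap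
    (hf : ∀ i x y, dist (f i x) (f i y) = r i * dist x y) (hr : ∀ i, 0 < r i ∧ r i < 1)
    (hKne : K.Nonempty) (hKc : IsCompact K) (hKinv : K = ⋃ i, f i '' K) {m : ℕ}
    {p : Phim r m → ℝ≥0∞} (hp : ∑' w, p w = 1) {μ : Measure E} [IsProbabilityMeasure μ]
    (hμ : IsSelfSimilarMeasure (fun w : Phim r m => wordMap f w) p μ) : lowerDim μ ≤ dimH K := by
  obtain ⟨c, hc, hrc⟩ := exists_nnreal_lt_one_forall_le fun i => (hr i).2
  have hcontr (w : Phim r m) : ContractingWith c (wordMap f w) :=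
    ⟨hc, lipschitzWith_wordMap hf <|
      (ratioProd_le_pow_length (fun i => (hr i).1.le) hrc w).trans <|
        pow_le_of_le_one c.coe_nonneg hc.le (List.length_eq_zero_iff.not.2 w.2.1)⟩
  exact lowerDim_le_dimH_of_ae_mem hKc.measurableSet <| hμ.ae_mem hp hcontr hKc hKne
    fun w => mapsTo_wordMap (mapsTo_of_eq_iUnion_image hKinv) w

lemma exists_isSelfSimilarMeasure_wordMap_le_lowerDim
    (hf : ∀ i x y, dist (f i x) (f i y) = r i * dist x y) (hr : ∀ i, 0 < r i ∧ r i < 1)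
    (hKne : K.Nonempty) (hKc : IsCompact K) (hKinv : K = ⋃ i, f i '' K) {d : ℝ≥0}
    (hd : d < dimH K) :
    ∃ m : ℕ, 1 ≤ m ∧ ∃ p : Phim r m → ℝ≥0∞, (∀ w, 0 < p w) ∧ ∑' w, p w = 1 ∧
      ∃ μ : Measure E, IsProbabilityMeasure μ ∧
        IsSelfSimilarMeasure (fun w : Phim r m => wordMap f w) p μ ∧ d ≤ lowerDim μ := by
  have hr0 (i : Fin n) : 0 ≤ r i := (hr i).1.le
  have hr1 (i : Fin n) : r i < 1 := (hr i).2
  obtain ⟨e, hre, he⟩ : ∃ e : ℝ, (∀ i, e < r i) ∧ 0 < e :=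
    ((eventually_all.2 fun i => eventually_nhdsWithin_of_eventually_nhds
      (eventually_lt_nhds (hr i).1)).and self_mem_nhdsWithin).exists (f := 𝓝[>] 0)
  lift e to ℝ≥0 using he.le
  obtain ⟨D, hD⟩ := WithTop.ne_top_iff_exists.1 hKc.isBounded.ediam_ne_top
  obtain ⟨m, hm, hem, hcover⟩ :=
    exists_nat_forall_isCover_two_le_card_mul_rpow hd D (NNReal.coe_pos.1 he)
  have hm0 : (0 : ℝ≥0) < m := Nat.cast_pos.2 (one_pos.trans hm)
  have hκ : 0 < e / m := div_pos (NNReal.coe_pos.1 he) hm0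
  have : Finite (Phim r m) := finite_Phim hr0 hr1 hm.le
  refine ⟨m, hm.le, exists_le_lowerDim_of_forall_isCover (L := (m : ℝ≥0)⁻¹) (κ := e / m) (D := D)
    (fun w => lipschitzWith_wordMap hf ?_) (inv_lt_one_of_one_lt₀ (Nat.one_lt_cast.2 hm))
    (fun w => antilipschitzWith_wordMap hf hκ ?_) hκ hem hKc hKne
    (eq_iUnion_image_wordMap_Phim hr0 hr1 hm.le hKinv) hD.ge fun N hN => hcover N ?_⟩
  · simpa using w.2.2.1.le
  · exact_mod_cast le_ratioProd_of_mem_Phim he.le (fun i => (hre i).le) w.2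
  · convert hN using 1
    field_simp

end Similarities

theorem stmt18_general {E : Type*} [MetricSpace E] [MeasurableSpace E] [BorelSpace E] {n : ℕ}
    (r : Fin n → ℝ) (f : Fin n → E → E)
    (hf : ∀ i x y, dist (f i x) (f i y) = r i * dist x y)
    (hr : ∀ i, 0 < r i ∧ r i < 1)
    (K : Set E) (hKne : K.Nonempty) (hKc : IsCompact K) (hKinv : K = ⋃ i, f i '' K) :
    dimH K = sSup {d : ℝ≥0∞ | ∃ m : ℕ, 1 ≤ m ∧ ∃ μ : Measure E,
      IsProbabilityMeasure μ ∧
      (∃ p : List (Fin n) → ℝ≥0∞, (∀ w ∈ Phim r m, 0 < p w) ∧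
        (∑' w : Phim r m, p w) = 1 ∧
        IsSelfSimilarMeasure (fun w : Phim r m => wordMap f w) (fun w => p w) μ) ∧
      d = lowerDim μ} := by
  refine le_antisymm (ENNReal.le_of_forall_nnreal_lt fun d hd => ?_) (sSup_le ?_)
  · obtain ⟨m, hm, p, hp0, hp1, μ, hμ_prob, hμ, hdμ⟩ :=
      exists_isSelfSimilarMeasure_wordMap_le_lowerDim hf hr hKne hKc hKinv hd
    have hext (w : Phim r m) : Function.extend Subtype.val p 0 w = p w :=
      Subtype.val_injective.extend_apply p 0 w
    refine hdμ.trans (le_sSup ⟨m, hm, μ, hμ_prob, ⟨Function.extend Subtype.val p 0,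
      fun w hw => ?_, ?_, ?_⟩, rfl⟩)
    · exact (hp0 ⟨w, hw⟩).trans_eq (hext ⟨w, hw⟩).symm
    · simpa only [hext] using hp1
    · simpa only [hext] using hμ
  · rintro _ ⟨m, -, μ, hμ_prob, ⟨p, -, hp1, hμ⟩, rfl⟩
    exact lowerDim_le_dimH_of_isSelfSimilarMeasure_wordMap hf hr hKne hKc hKinv hp1 hμ

theorem stmt18 {n : ℕ} (hn : 2 ≤ n) (r t : Fin n → ℝ) (f : Fin n → ℝ → ℝ)
    (hf : ∀ i x, f i x = r i * x + t i)
    (hr : ∀ i, 0 < r i ∧ r i < 1)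
    (a b : ℝ) (hab : a < b)
    (hmaps : ∀ i, MapsTo (f i) (Icc a b) (Icc a b))
    (hfix : ∃ i j : Fin n, ∃ y ∈ Icc a b, ∃ z ∈ Icc a b, f i y = y ∧ f j z = z ∧ y ≠ z)
    (K : Set ℝ) (hKne : K.Nonempty) (hKc : IsCompact K) (hKinv : K = ⋃ i, f i '' K) :
    dimH K = sSup {d : ℝ≥0∞ | ∃ m : ℕ, 1 ≤ m ∧ ∃ μ : Measure ℝ,
      IsProbabilityMeasure μ ∧
      (∃ p : List (Fin n) → ℝ≥0∞, (∀ w ∈ Phim r m, 0 < p w) ∧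
        (∑' w : {w : List (Fin n) // w ∈ Phim r m}, p w.1) = 1 ∧
        μ = Measure.sum
          (fun w : {w : List (Fin n) // w ∈ Phim r m} => p w.1 • μ.map (compList f w.1))) ∧
      d = dimOf μ} := by
  rw [compList_eq_wordMap]
  exact stmt18_general r f (fun i x y => by
    rw [hf, hf, dist_add_right, Real.dist_eq, Real.dist_eq, ← mul_sub, abs_mul,
      abs_of_pos (hr i).1]) hr K hKne hKc hKinv
end
end

section
/- There exist real numbers v_1, v_2, v_3, v_4 > 0 such that: (i) for all i, j ∈ {1,2,3,4}, the ratio v_i/v_j is either rational or a Liouville number; and (ii) there exist C > 0, l > 0 and X > 0 such that for every x ∈ ℝ with |x| ≥ X, inf_{y∈ℝ} max_{1≤i≤4} dist(v_i·x + y, ℤ) ≥ C·|x|^{−l}. -/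
/-!
Take `v l = 1 + b l * E` with `b` injective and nonnegative. For generic `E > 0` all ratios
`v l / v l'` with `l ≠ l'` are Liouville numbers: each ratio is an open continuous function of
`log E`, and the Liouville numbers are residual.

The Diophantine condition only sees `θ = (v k - v i) / (v j - v i)`, which does not depend on `E`.
Subtracting the coordinate `i` eliminates `y`: if the three numbers `v i * x + y`, `v j * x + y`,
`v k * x + y` are close to integers, then so are `z` and `θ * z` for `z = (v j - v i) * x`, and the
two integers have a quotient close to `θ`. When `θ` is irrational and not Liouville, this
closeness is at best a negative power of `|z|`. With `b k = √2` and the other values of `b` natural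
numbers, `θ` is an algebraic irrational, hence not Liouville.
-/

open Set

noncomputable section

/-- The Diophantine condition on the frequencies `v`: up to a constant, the point `v * x` of the
torus stays at distance at least a power of `1 / |x|` from the diagonal, uniformly in the
translation `y`. The inequality `c ≤ max_i d_i` is encoded as `∃ i, c ≤ d_i`. -/
def IsUniformlyDiophantine {ι : Type*} (v : ι → ℝ) : Prop :=
  ∃ C l X : ℝ, 0 < C ∧ 0 < l ∧ 0 < X ∧ ∀ x : ℝ, X ≤ |x| → ∀ y : ℝ,
    ∃ i, C * |x| ^ (-l) ≤ |v i * x + y - (round (v i * x + y) : ℝ)|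

theorem eventually_residual_liouville_of_hasStrictDerivAt {f f' : ℝ → ℝ}
    (hf : ∀ t, HasStrictDerivAt f (f' t) t) (hf' : ∀ t, f' t ≠ 0) :
    ∀ᶠ t in residual ℝ, Liouville (f t) :=
  have hcont : Continuous f :=
    continuous_iff_continuousAt.2 fun t => (hf t).hasDerivAt.continuousAt
  (tendsto_residual_of_isOpenMap hcont (isOpenMap_of_hasStrictDerivAt hf hf')).eventually
    eventually_residual_liouville

theorem eventually_residual_liouville_mobius_exp {a b c d : ℝ} (hdet : b * c - a * d ≠ 0)
    (hden : ∀ t, c + d * Real.exp t ≠ 0) :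
    ∀ᶠ t in residual ℝ, Liouville ((a + b * Real.exp t) / (c + d * Real.exp t)) := by
  have affine (p q t : ℝ) :
      HasStrictDerivAt (fun s => p + q * Real.exp s) (q * Real.exp t) t :=
    ((Real.hasStrictDerivAt_exp t).const_mul q).const_add p
  have hderiv (t : ℝ) : HasStrictDerivAt (fun s => (a + b * Real.exp s) / (c + d * Real.exp s))
      ((b * c - a * d) * Real.exp t / (c + d * Real.exp t) ^ 2) t :=
    ((affine a b t).fun_div (affine c d t) (hden t)).congr_deriv (by ring)
  exact eventually_residual_liouville_of_hasStrictDerivAt hderiv fun t =>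
    div_ne_zero (mul_ne_zero hdet (Real.exp_ne_zero t)) (pow_ne_zero 2 (hden t))

theorem exists_pos_pairwise_liouville_div {ι : Type*} [Countable ι] {b : ι → ℝ}
    (hb : Function.Injective b) (hb₀ : ∀ i, 0 ≤ b i) :
    ∃ E : ℝ, 0 < E ∧ ∀ i j, i ≠ j → Liouville ((1 + b i * E) / (1 + b j * E)) := by
  have hgeneric : ∀ᶠ t in residual ℝ, ∀ i j, i ≠ j →
      Liouville ((1 + b i * Real.exp t) / (1 + b j * Real.exp t)) := by
    simp only [eventually_countable_forall]
    intro i j hij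
    refine eventually_residual_liouville_mobius_exp ?_ fun t => ?_
    · simpa only [mul_one, one_mul] using sub_ne_zero.2 (hb.ne hij)
    · have := hb₀ j
      positivity
  obtain ⟨t, ht⟩ := (dense_of_mem_residual hgeneric).nonempty
  exact ⟨Real.exp t, Real.exp_pos t, ht⟩

section Diophantine

variable {θ : ℝ}

theorem exists_forall_le_abs_mul_sub_of_not_liouville (hirr : Irrational θ) (hθ : ¬ Liouville θ) :
    ∃ k : ℕ, ∀ m n : ℤ, m ≠ 0 → 1 / (2 * |(m : ℝ)|) ^ k ≤ |θ * m - n| := by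
  unfold Liouville at hθ
  push Not at hθ
  obtain ⟨k, hk⟩ := hθ
  refine ⟨k, fun m n hm => ?_⟩
  have hm₁ : 1 ≤ |m| := Int.one_le_abs hm
  have hm₀ : (m : ℝ) ≠ 0 := Int.cast_ne_zero.2 hm
  -- Doubling the fraction makes the denominator exceed `1`, as the definition of `Liouville` asks.
  have hfrac : ((2 * m.sign * n : ℤ) : ℝ) / ((2 * |m| : ℤ) : ℝ) = n / m := by
    have hsign : (m.sign : ℝ) ≠ 0 := Int.cast_ne_zero.2 (mt Int.sign_eq_zero_iff_zero.1 hm)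
    rw [← Int.sign_mul_self_eq_abs]
    push_cast
    field_simp
  have happrox := hk (2 * m.sign * n) (2 * |m|) (by lia) (hirr.ne_rational _ _)
  rw [hfrac] at happrox
  push_cast at happrox
  calc 1 / (2 * |(m : ℝ)|) ^ k ≤ |θ - n / m| := happrox
    _ ≤ |θ - n / m| * |(m : ℝ)| := le_mul_of_one_le_right (abs_nonneg _) (mod_cast hm₁)
    _ = |θ * m - n| := by rw [← abs_mul, sub_mul, div_mul_cancel₀ _ hm₀]

theorem exists_forall_le_max_abs_sub_of_not_liouville (hirr : Irrational θ) (hθ : ¬ Liouville θ) :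
    ∃ k : ℕ, ∀ z : ℝ, 1 ≤ |z| → ∀ m n : ℤ,
      1 / ((1 + |θ|) * (4 * |z|) ^ k) ≤ max |z - m| |θ * z - n| := by
  obtain ⟨k, hk⟩ := exists_forall_le_abs_mul_sub_of_not_liouville hirr hθ
  refine ⟨k, fun z hz m n => ?_⟩
  have hθ₀ := abs_nonneg θ
  rcases le_or_gt 1 |z - m| with hfar | hnear
  · refine le_max_of_le_left (le_trans ?_ hfar)
    exact div_le_one_of_le₀ (one_le_mul_of_one_le_of_one_le (by linarith)
      (one_le_pow₀ (by linarith))) (by positivity)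
  have hm : m ≠ 0 := by
    rintro rfl
    rw [Int.cast_zero, sub_zero] at hnear
    exact hnear.not_ge hz
  have hmz : 2 * |(m : ℝ)| ≤ 4 * |z| := by
    have := abs_sub_abs_le_abs_sub (m : ℝ) z
    rw [abs_sub_comm] at this
    linarith
  have hlower : 1 / (4 * |z|) ^ k ≤ |θ * m - n| := by
    refine le_trans ?_ (hk m n hm)
    gcongr
  have hupper : |θ * m - n| ≤ (1 + |θ|) * max |z - m| |θ * z - n| := by
    calc |θ * m - n| = |(θ * z - n) - θ * (z - m)| := by ring_nf
      _ ≤ |θ * z - n| + |θ| * |z - m| := by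
        rw [← abs_mul]
        exact abs_sub _ _
      _ ≤ max |z - m| |θ * z - n| + |θ| * max |z - m| |θ * z - n| := by
        gcongr
        exacts [le_max_right _ _, le_max_left _ _]
      _ = (1 + |θ|) * max |z - m| |θ * z - n| := by ring
  rw [mul_comm (1 + |θ|), ← div_div, div_le_iff₀' (by positivity)]
  exact hlower.trans hupper

end Diophantine

theorem isUniformlyDiophantine_of_div_sub {ι : Type*} {v : ι → ℝ} {i j k : ι}
    (hirr : Irrational ((v k - v i) / (v j - v i)))
    (hθ : ¬ Liouville ((v k - v i) / (v j - v i))) : IsUniformlyDiophantine v := by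
  obtain ⟨p, hp⟩ := exists_forall_le_max_abs_sub_of_not_liouville hirr hθ
  have hD : v j - v i ≠ 0 := by
    intro h
    exact hirr.ne_zero (by rw [h, div_zero])
  set D := v j - v i
  set θ := (v k - v i) / D with hθdef
  have hD₀ : 0 < |D| := abs_pos.2 hD
  set C := 1 / (2 * ((1 + |θ|) * (4 * |D|) ^ p)) with hC
  refine ⟨C, p + 1, max 1 (1 / |D|), by positivity, by positivity, by positivity,
    fun x hx y => ?_⟩
  obtain ⟨hx₁, hxD⟩ := max_le_iff.1 hx
  by_contra! hnear
  have hz : 1 ≤ |D * x| := by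
    rwa [abs_mul, mul_comm, ← div_le_iff₀ hD₀]
  have hdiff (l : ι) : |(v l - v i) * x -
      ((round (v l * x + y) - round (v i * x + y) : ℤ) : ℝ)| < 2 * (C * |x| ^ (-(p + 1) : ℝ)) := by
    calc _ = |(v l * x + y - round (v l * x + y)) - (v i * x + y - round (v i * x + y))| := by
          push_cast
          ring_nf
      _ ≤ |v l * x + y - round (v l * x + y)| + |v i * x + y - round (v i * x + y)| := abs_sub _ _
      _ < _ := by linarith [hnear l, hnear i]
  have hθz : θ * (D * x) = (v k - v i) * x := by rw [← mul_assoc, hθdef, div_mul_cancel₀ _ hD]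
  have hlower := hp (D * x) hz (round (v j * x + y) - round (v i * x + y))
    (round (v k * x + y) - round (v i * x + y))
  rw [hθz] at hlower
  have hpow : |x| ^ (-(p + 1) : ℝ) ≤ (|x| ^ p)⁻¹ := by
    rw [← Real.rpow_natCast, ← Real.rpow_neg (abs_nonneg x)]
    exact Real.rpow_le_rpow_of_exponent_le hx₁ (by linarith)
  refine (hlower.trans_lt (max_lt (hdiff j) (hdiff k))).not_ge ?_
  calc 2 * (C * |x| ^ (-(p + 1) : ℝ)) ≤ 2 * (C * (|x| ^ p)⁻¹) := by gcongr
    _ = 1 / ((1 + |θ|) * (4 * |D * x|) ^ p) := by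
      rw [hC, abs_mul, ← mul_assoc 4, mul_pow (4 * |D|)]
      field_simp

theorem isAlgebraic_sqrt_natCast (n : ℕ) : IsAlgebraic ℤ √(n : ℝ) :=
  .of_pow two_pos (by rw [Real.sq_sqrt n.cast_nonneg]; exact isAlgebraic_natCast n)

theorem injective_update_of_forall_ne {α β : Type*} [DecidableEq α] {f : α → β}
    (hf : Function.Injective f) (a : α) {b : β} (hb : ∀ x, f x ≠ b) :
    Function.Injective (Function.update f a b) := by
  intro x y hxy
  by_cases hx : x = a <;> by_cases hy : y = a <;>
    simp_all [hf.eq_iff, (hb _).symm]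

theorem exists_injective_nonneg_irrational_not_liouville_div_sub {ι : Type*} [Countable ι]
    {i j k : ι} (hij : i ≠ j) (hik : i ≠ k) (hjk : j ≠ k) :
    ∃ b : ι → ℝ, Function.Injective b ∧ (∀ l, 0 ≤ b l) ∧
      Irrational ((b k - b i) / (b j - b i)) ∧ ¬ Liouville ((b k - b i) / (b j - b i)) := by
  classical
  obtain ⟨e, he⟩ := exists_injective_nat ι
  set b : ι → ℝ := Function.update (fun l => (e l : ℝ)) k √2
  have hb (l : ι) (hl : l ≠ k) : b l = e l := Function.update_of_ne hl ..
  have hk : b k = √2 := Function.update_self ..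
  have hji : (e j : ℤ) - e i ≠ 0 := sub_ne_zero.2 (mod_cast he.ne hij.symm)
  refine ⟨b, ?_, fun l => ?_, ?_, ?_⟩
  · exact injective_update_of_forall_ne (Nat.cast_injective.comp he) k fun l =>
      (irrational_sqrt_two.ne_nat (e l)).symm
  · obtain rfl | hl := eq_or_ne l k
    · rw [hk]
      positivity
    · rw [hb l hl]
      positivity
  · rw [hb i hik, hb j hjk, hk]
    exact_mod_cast (irrational_sqrt_two.sub_natCast (e i)).div_intCast hji
  · have halg : IsAlgebraic ℤ ((√2 - e i) * (e j - e i : ℝ)⁻¹) :=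
      ((isAlgebraic_sqrt_natCast 2).sub (isAlgebraic_natCast _)).mul
        ((isAlgebraic_natCast _).sub (isAlgebraic_natCast _)).inv
    rw [hb i hik, hb j hjk, hk, div_eq_mul_inv]
    exact fun h => h.transcendental halg

theorem stmt19_general {ι : Type*} [Countable ι] {i j k : ι}
    (hij : i ≠ j) (hik : i ≠ k) (hjk : j ≠ k) :
    ∃ v : ι → ℝ, (∀ l, 0 < v l) ∧ (∀ l l', l ≠ l' → Liouville (v l / v l')) ∧
      IsUniformlyDiophantine v := by
  obtain ⟨b, hb, hb₀, hirr, hθ⟩ :=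
    exists_injective_nonneg_irrational_not_liouville_div_sub hij hik hjk
  obtain ⟨E, hE, hliouville⟩ := exists_pos_pairwise_liouville_div hb hb₀
  have hratio : ((1 + b k * E) - (1 + b i * E)) / ((1 + b j * E) - (1 + b i * E)) =
      (b k - b i) / (b j - b i) := by
    simp only [add_sub_add_left_eq_sub, ← sub_mul, mul_div_mul_right _ _ hE.ne']
  refine ⟨fun l => 1 + b l * E, fun l => ?_, hliouville,
    isUniformlyDiophantine_of_div_sub (i := i) (j := j) (k := k) ?_ ?_⟩
  · exact add_pos_of_pos_of_nonneg one_pos (mul_nonneg (hb₀ l) hE.le)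
  · rwa [hratio]
  · rwa [hratio]

theorem stmt19 :
    ∃ v : Fin 4 → ℝ, (∀ i, 0 < v i) ∧
      (∀ i j : Fin 4, (∃ q : ℚ, v i / v j = (q : ℝ)) ∨ Liouville (v i / v j)) ∧
      ∃ C l X : ℝ, 0 < C ∧ 0 < l ∧ 0 < X ∧
        ∀ x : ℝ, X ≤ |x| → ∀ y : ℝ,
          ∃ i : Fin 4, C * |x| ^ (-l) ≤ |v i * x + y - (round (v i * x + y) : ℝ)| := by
  obtain ⟨v, hv, hliouville, hdioph⟩ := stmt19_general (ι := Fin 4) (i := 0) (j := 1) (k := 2)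
    (by decide) (by decide) (by decide)
  refine ⟨v, hv, fun i j => ?_, hdioph⟩
  obtain rfl | hij := eq_or_ne i j
  · exact .inl ⟨1, by rw [div_self (hv i).ne', Rat.cast_one]⟩
  · exact .inr (hliouville i j hij)
end
end
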